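/- arXiv:1304.7936 — 4 statements merged into one kernel-verified Lean document; each statement's English description precedes it below -/
import Mathlib

section
/- Let f : [0,∞) → [0,∞) be a continuous operator monotone function. Then there exists a finite Borel measure μ on [0,1] such that f(x) = ∫_{[0,1]} (1 !_t x) dμ(t) for every x ∈ [0,∞). -/
open MeasureTheory Real ComplexOrder

/-- The `t`-weighted harmonic mean `1 !_t x` of `1` and `x`, for `t ∈ [0,1]`, `x ∈ [0,∞)`. -/
noncomputable def whm (t x : ℝ) : ℝ :=
  if t = 0 ∧ x = 0 then 1 else x / ((1 - t) * x + t)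

/-- `f` is operator monotone on `[0,∞)`: for all `n` and all positive semidefinite complex
`n × n` matrices `A ≤ B` (Loewner order), `f(A) ≤ f(B)` via the continuous functional
calculus. -/
def OperatorMonotone (f : ℝ → ℝ) : Prop :=
  ∀ (n : ℕ) (A B : Matrix (Fin n) (Fin n) ℂ),
    A.PosSemidef → B.PosSemidef → (B - A).PosSemidef →
    (cfc f B - cfc f A).PosSemidef

open Polynomial in
lemma cfc_eig {n : ℕ} (B : Matrix (Fin n) (Fin n) ℂ) (hB : B.IsHermitian) (f : ℝ → ℝ) (b : ℝ)
    (u : Fin n → ℂ) (h : B.mulVec u = (b : ℂ) • u) :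
    (cfc f B).mulVec u = (f b : ℂ) • u := by
  classical
  have hfin : (spectrum ℝ B).Finite := Matrix.finite_real_spectrum
  set S : Finset ℝ := insert b hfin.toFinset
  set p := Lagrange.interpolate S id f
  have hp : ∀ x ∈ S, p.eval x = f x := fun x hx =>
    Lagrange.eval_interpolate_at_node (v := id) f Function.injective_id.injOn hx
  have h1 : cfc f B = aeval B p := by
    have hB' : IsSelfAdjoint B := hB
    rw [← cfc_polynomial p B hB']
    apply cfc_congr
    intro x hx
    exact (hp x (by simp [S, hx])).symm
  have h2 : ∀ p : ℝ[X], (aeval B p).mulVec u = ((p.eval b : ℝ) : ℂ) • u := by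
    intro p
    induction p using Polynomial.induction_on' with
    | add p q hp hq => simp [Matrix.add_mulVec, hp, hq, add_smul]
    | monomial k c =>
      have : ∀ k : ℕ, (B ^ k).mulVec u = ((b : ℂ) ^ k) • u := by
        intro k
        induction k with
        | zero => simp
        | succ k ih =>
          rw [pow_succ, ← Matrix.mulVec_mulVec, h, Matrix.mulVec_smul, ih, smul_smul]
          congr 1; ring
      rw [aeval_monomial, ← Matrix.mulVec_mulVec, this, Matrix.mulVec_smul]
      have h3 : ((algebraMap ℝ (Matrix (Fin n) (Fin n) ℂ)) c).mulVec u = (c : ℂ) • u := by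
        rw [Algebra.algebraMap_eq_smul_one, Matrix.smul_mulVec, Matrix.one_mulVec]
        ext i; simp
      rw [h3, smul_smul]
      simp [mul_comm]
  rw [h1, h2, hp b (by simp [S])]

open Polynomial Lagrange in
lemma lagr {m : ℕ} (c : Fin m → ℝ) (hc : Function.Injective c) (q : ℝ[X]) (hq : q.degree < m)
    (z : ℝ) (hz : ∀ i, z ≠ c i) :
    ∑ i, q.eval (c i) * nodalWeight Finset.univ c i * (z - c i)⁻¹
      = q.eval z * (∏ i, (z - c i))⁻¹ := by
  have h := eq_interpolate (s := Finset.univ) (v := c) (f := q) hc.injOn (by simpa using hq)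
  have h2 := eval_interpolate_not_at_node (s := Finset.univ) (v := c)
    (fun i => q.eval (c i)) (x := z) (fun i _ => hz i)
  rw [← h, eval_nodal] at h2
  have h0 : (∏ i, (z - c i)) ≠ 0 := Finset.prod_ne_zero_iff.mpr fun i _ => sub_ne_zero.mpr (hz i)
  rw [h2, mul_comm, ← mul_assoc, inv_mul_cancel₀ h0, one_mul]
  exact Finset.sum_congr rfl fun i _ => by ring

open Polynomial Lagrange in
lemma key0 (f : ℝ → ℝ) (hm : OperatorMonotone f) {m : ℕ} (a b : Fin m → ℝ)
    (ha : ∀ i, 0 ≤ a i) (hab : ∀ i, a i < b i) (hba : ∀ i j, i < j → b i < a j)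
    (q : ℝ[X]) (hq : q.degree < m) :
    0 ≤ ∑ j, q.eval (b j) ^ 2 * f (b j) *
          (nodalWeight Finset.univ b j * (∏ k, (b j - a k))⁻¹) +
        ∑ i, q.eval (a i) ^ 2 * f (a i) *
          (nodalWeight Finset.univ a i * (∏ k, (a i - b k))⁻¹) := by
  classical
  have aam : StrictMono a := fun i j h => (hab i).trans (hba i j h)
  have bbm : StrictMono b := fun i j h => (hba i j h).trans (hab j)
  have hne : ∀ i j, b j ≠ a i := by
    intro i j
    rcases lt_or_ge j i with h | h
    · exact (hba _ _ h).ne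
    · exact ((aam.monotone h).trans_lt (hab j)).ne'
  have hNb : ∀ i, (∏ k, (a i - b k)) ≠ 0 := fun i =>
    Finset.prod_ne_zero_iff.mpr fun k _ => sub_ne_zero.mpr (hne i k).symm
  have hNa : ∀ j, (∏ k, (b j - a k)) ≠ 0 := fun j =>
    Finset.prod_ne_zero_iff.mpr fun k _ => sub_ne_zero.mpr (hne k j)
  have hW : ∀ i, 0 ≤ -((∏ k, (a i - b k)) * nodalWeight Finset.univ a i) := by
    intro i
    rw [nodalWeight, ← Finset.mul_prod_erase Finset.univ _ (Finset.mem_univ i), mul_assoc,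
      ← Finset.prod_mul_distrib, ← neg_mul]
    apply mul_nonneg
    · linarith [hab i]
    · apply Finset.prod_nonneg
      intro k hk
      have hk' : k ≠ i := (Finset.mem_erase.mp hk).1
      rcases lt_or_gt_of_ne hk' with h | h
      · exact mul_nonneg (by linarith [hba k i h]) (inv_nonneg.mpr (by linarith [aam h]))
      · exact mul_nonneg_of_nonpos_of_nonpos (by linarith [hab k, aam h])
          (inv_nonpos.mpr (by linarith [aam h]))
  set w : Fin m → ℝ := fun i => √(-((∏ k, (a i - b k)) * nodalWeight Finset.univ a i)) with hw
  have hw2 : ∀ i, w i * w i = -((∏ k, (a i - b k)) * nodalWeight Finset.univ a i) :=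
    fun i => Real.mul_self_sqrt (hW i)
  -- secular equation
  have hsec : ∀ j, ∑ k, w k * (w k * (b j - a k)⁻¹) = 1 := by
    intro j
    have hdeg : (nodal Finset.univ b - nodal Finset.univ a).degree < m := by
      have := degree_sub_lt_left (p := nodal Finset.univ b) (q := nodal Finset.univ a)
        (by simp [degree_nodal]) nodal_ne_zero
        (by rw [nodal_monic.leadingCoeff, nodal_monic.leadingCoeff])
      simpa [degree_nodal] using this
    have h := lagr a aam.injective _ hdeg (b j) (fun i => hne i j)
    rw [eval_sub, eval_nodal, eval_nodal, Finset.prod_eq_zero (Finset.mem_univ j) (sub_self _),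
      zero_sub, neg_mul, mul_inv_cancel₀ (hNa j)] at h
    rw [← neg_inj, ← h, ← Finset.sum_neg_distrib]
    refine Finset.sum_congr rfl fun k _ => ?_
    have hz : (∏ i, (a k - a i)) = 0 := Finset.prod_eq_zero (Finset.mem_univ k) (sub_self (a k))
    rw [eval_sub, eval_nodal, eval_nodal, hz, sub_zero, ← mul_assoc, hw2]
    ring
  -- matrices
  set A : Matrix (Fin m) (Fin m) ℂ := Matrix.diagonal fun i => (a i : ℂ) with hA
  set R : Matrix (Fin m) (Fin m) ℂ :=
    Matrix.vecMulVec (fun i => (w i : ℂ)) (star fun i => (w i : ℂ)) with hR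
  have hAp : A.PosSemidef := by
    refine Matrix.PosSemidef.diagonal ?_
    intro i
    simpa using ha i
  have hRp : R.PosSemidef := Matrix.posSemidef_vecMulVec_self_star _
  have hBp : (A + R).PosSemidef := hAp.add hRp
  have hM := hm m A (A + R) hAp hBp (by simpa using hRp)
  set u : Fin m → Fin m → ℂ := fun j i => ((w i * (b j - a i)⁻¹ : ℝ) : ℂ) with hu
  have hBu : ∀ j, (A + R).mulVec (u j) = (b j : ℂ) • u j := by
    intro j
    ext i
    have h1 : (∑ k, (w k : ℂ) * u j k) = 1 := by
      have := congrArg (fun x : ℝ => (x : ℂ)) (hsec j)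
      push_cast at this
      simpa [hu] using this
    have h2 : (A + R).mulVec (u j) i = (a i : ℂ) * u j i + w i := by
      rw [Matrix.add_mulVec, Pi.add_apply, hA, Matrix.mulVec_diagonal]
      congr 1
      simp only [hR, Matrix.mulVec, dotProduct, Matrix.vecMulVec_apply, Pi.star_apply]
      calc _ = (w i : ℂ) * ∑ k, (w k : ℂ) * u j k := by
            rw [Finset.mul_sum]
            refine Finset.sum_congr rfl fun k _ => ?_
            simp; ring
        _ = _ := by rw [h1, mul_one]
    rw [h2, Pi.smul_apply, smul_eq_mul]
    have hb : b j - a i ≠ 0 := sub_ne_zero.mpr (hne i j)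
    have : a i * (w i * (b j - a i)⁻¹) + w i = b j * (w i * (b j - a i)⁻¹) := by
      field_simp; ring
    have := congrArg (fun x : ℝ => (x : ℂ)) this
    push_cast at this
    simpa [hu] using this
  have hcB : ∀ j, (cfc f (A + R)).mulVec (u j) = (f (b j) : ℂ) • u j :=
    fun j => cfc_eig _ hBp.1 f _ _ (hBu j)
  have hcA : ∀ i, (cfc f A).mulVec (Pi.single i 1) = (f (a i) : ℂ) • Pi.single i 1 := by
    intro i
    apply cfc_eig _ hAp.1
    rw [hA]
    ext k
    rw [Matrix.mulVec_diagonal]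
    by_cases h : k = i
    · subst h; simp
    · simp [h]
  -- test vector
  set r : Fin m → ℝ := fun j => q.eval (b j) * nodalWeight Finset.univ b j with hr
  set v : Fin m → ℝ := fun i => q.eval (a i) * w i * (∏ k, (a i - b k))⁻¹ with hv
  have hvr : ∀ i, v i = ∑ j, -r j * (w i * (b j - a i)⁻¹) := by
    intro i
    have h := lagr b bbm.injective q hq (a i) (fun j => (hne i j).symm)
    have : v i = w i * (eval (a i) q * (∏ k, (a i - b k))⁻¹) := by simp only [hv]; ring
    rw [this, ← h, Finset.mul_sum]
    refine Finset.sum_congr rfl fun k _ => ?_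
    simp only [hr]
    rw [← neg_sub (b k) (a i), inv_neg]
    ring
  set V : Fin m → ℂ := fun i => (v i : ℂ) with hV
  have hV1 : V = ∑ j, (-(r j : ℂ)) • u j := by
    ext i
    simp only [hV, hvr i, hu, Finset.sum_apply, Pi.smul_apply, smul_eq_mul]
    push_cast
    rfl
  have hV2 : V = ∑ i, V i • (Pi.single i (1 : ℂ) : Fin m → ℂ) := by
    ext k
    simp [Finset.sum_apply, Pi.single_apply]
  have hBV : ∀ i, (cfc f (A + R)).mulVec V i
      = ((∑ j, -r j * (f (b j) * (w i * (b j - a i)⁻¹)) : ℝ) : ℂ) := by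
    intro i
    rw [hV1, Matrix.mulVec_sum]
    simp only [Matrix.mulVec_smul, hcB, Finset.sum_apply, Pi.smul_apply, smul_eq_mul]
    simp only [hu]
    push_cast
    rfl
  have hAV : ∀ i, (cfc f A).mulVec V i = ((f (a i) * v i : ℝ) : ℂ) := by
    intro i
    rw [hV2, Matrix.mulVec_sum]
    simp only [Matrix.mulVec_smul, hcA, Finset.sum_apply, Pi.smul_apply, smul_eq_mul]
    simp [Pi.single_apply, hV, mul_comm]
  have hpos := hM.dotProduct_mulVec_nonneg V
  have heq : dotProduct (star V) ((cfc f (A + R) - cfc f A).mulVec V) =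
      ((∑ i, v i * (∑ j, -r j * (f (b j) * (w i * (b j - a i)⁻¹)) - f (a i) * v i) : ℝ) : ℂ) := by
    rw [Matrix.sub_mulVec]
    simp only [dotProduct, Pi.sub_apply, hBV, hAV, Pi.star_apply]
    push_cast
    simp [hV]
  rw [heq] at hpos
  have hpos' := Complex.zero_le_real.mp hpos
  refine hpos'.trans_eq ?_
  have e1 : ∀ j, ∑ i, v i * (w i * (b j - a i)⁻¹) = -(q.eval (b j) * (∏ k, (b j - a k))⁻¹) := by
    intro j
    rw [← lagr a aam.injective q hq (b j) (fun i => hne i j), ← Finset.sum_neg_distrib]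
    refine Finset.sum_congr rfl fun i _ => ?_
    have : v i * (w i * (b j - a i)⁻¹)
      = eval (a i) q * (w i * w i) * (∏ k, (a i - b k))⁻¹ * (b j - a i)⁻¹ := by
      simp only [hv]; ring
    rw [this, hw2]
    have := hNb i
    field_simp
  simp only [mul_sub, Finset.sum_sub_distrib, Finset.mul_sum]
  rw [sub_eq_add_neg]
  congr 1
  · rw [Finset.sum_comm]
    refine Finset.sum_congr rfl fun j _ => ?_
    calc _ = -(r j * f (b j)) * ∑ i, v i * (w i * (b j - a i)⁻¹) := by
          rw [Finset.mul_sum]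
          exact Finset.sum_congr rfl fun i _ => by ring
      _ = _ := by rw [e1]; simp only [hr]; ring
  · rw [← Finset.sum_neg_distrib]
    refine Finset.sum_congr rfl fun i _ => ?_
    have : v i * (f (a i) * v i)
      = eval (a i) q ^ 2 * f (a i) * (w i * w i) * ((∏ k, (a i - b k))⁻¹) ^ 2 := by
      simp only [hv]; ring
    rw [this, hw2]
    have := hNb i
    field_simp

open Polynomial in
lemma nonneg_of_ne (Q : ℝ[X]) (r : ℝ) (h : ∀ z < 0, z ≠ r → 0 ≤ Q.eval z) :
    ∀ z < 0, 0 ≤ Q.eval z := by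
  intro z hz
  by_cases hzr : z = r
  · have ht : Filter.Tendsto (fun y => Q.eval y) (nhdsWithin z {z}ᶜ) (nhds (Q.eval z)) :=
      (Q.continuous.tendsto z).mono_left nhdsWithin_le_nhds
    refine ge_of_tendsto ht ?_
    have h1 : ∀ᶠ y in nhdsWithin z {z}ᶜ, y < 0 :=
      Filter.Eventually.filter_mono nhdsWithin_le_nhds (Iio_mem_nhds hz)
    filter_upwards [h1, self_mem_nhdsWithin] with y hy hy2
    exact h y hy (by rintro rfl; exact hy2 hzr.symm)
  · exact h z hz hzr

open Polynomial in
lemma pos_poly (d : ℕ) : ∀ (R : ℝ[X]), R.natDegree ≤ d → (∀ z < 0, 0 ≤ R.eval z) →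
    ∀ Φ : ℝ[X] →ₗ[ℝ] ℝ, (∀ q : ℝ[X], 2 * q.natDegree ≤ d → 0 ≤ Φ (q ^ 2)) →
      (∀ q : ℝ[X], 2 * q.natDegree + 1 ≤ d → 0 ≤ Φ (-X * q ^ 2)) → 0 ≤ Φ R := by
  induction d using Nat.strong_induction_on with
  | _ d ih =>
  intro R hd hR Φ h1 h2
  by_cases hR0 : R.natDegree = 0
  · rw [natDegree_eq_zero] at hR0
    obtain ⟨c, rfl⟩ := hR0
    have hc : 0 ≤ c := by simpa using hR (-1) (by norm_num)
    have : (C c : ℝ[X]) = (C (√c)) ^ 2 := by rw [← C_pow, Real.sq_sqrt hc]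
    rw [this]
    exact h1 _ (by simp)
  have hRne : R ≠ 0 := by rintro rfl; simp at hR0
  obtain ⟨z, hz⟩ : ∃ z : ℂ, aeval z R = 0 := by
    have := Complex.exists_root (f := R.map (algebraMap ℝ ℂ)) (by
      rw [degree_map]; exact natDegree_pos_iff_degree_pos.mp (Nat.pos_of_ne_zero hR0))
    obtain ⟨z, hz⟩ := this
    exact ⟨z, by simpa [IsRoot, eval_map_algebraMap] using hz⟩
  -- quadratic step
  have quad : ∀ (x y : ℝ) (Q : ℝ[X]), R = ((X - C x) ^ 2 + C (y ^ 2)) * Q →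
      (∀ z < 0, 0 ≤ Q.eval z) → 0 ≤ Φ R := by
    intro x y Q hQ hQp
    have hFm : ((X - C x) ^ 2 + C (y ^ 2)).Monic := by
      apply Monic.add_of_left ((monic_X_sub_C x).pow 2)
      rw [degree_pow, degree_X_sub_C]
      exact degree_C_le.trans_lt (by norm_num)
    have hF : ((X - C x) ^ 2 + C (y ^ 2)).natDegree = 2 := by
      rw [natDegree_add_C, natDegree_pow, natDegree_X_sub_C]
    have hQ0 : Q ≠ 0 := by rintro rfl; simp [hRne] at hQ
    have hdeg : R.natDegree = 2 + Q.natDegree := by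
      rw [hQ, natDegree_mul hFm.ne_zero hQ0, hF]
    have hx : ∀ q : ℝ[X], (q * (X - C x)).natDegree ≤ q.natDegree + 1 := fun q =>
      natDegree_mul_le.trans (by rw [natDegree_X_sub_C])
    have hy : ∀ q : ℝ[X], (q * C y).natDegree ≤ q.natDegree := fun q =>
      natDegree_mul_C_le _ _
    have := ih (d - 2) (by omega) Q (by omega) hQp
      (Φ ∘ₗ LinearMap.mulLeft ℝ ((X - C x) ^ 2 + C (y ^ 2))) (by
        intro q hq
        have e : ((X - C x) ^ 2 + C (y ^ 2)) * q ^ 2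
          = (q * (X - C x)) ^ 2 + (q * C y) ^ 2 := by rw [C_pow]; ring
        simp only [LinearMap.comp_apply, LinearMap.mulLeft_apply]
        rw [e, map_add]
        have := hx q; have := hy q
        exact add_nonneg (h1 _ (by omega)) (h1 _ (by omega))) (by
        intro q hq
        have e : ((X - C x) ^ 2 + C (y ^ 2)) * (-X * q ^ 2)
          = -X * (q * (X - C x)) ^ 2 + -X * (q * C y) ^ 2 := by rw [C_pow]; ring
        simp only [LinearMap.comp_apply, LinearMap.mulLeft_apply]
        rw [e, map_add]
        have := hx q; have := hy q
        exact add_nonneg (h2 _ (by omega)) (h2 _ (by omega)))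
    simpa [hQ] using this
  by_cases him : z.im = 0
  · have hroot : R.eval z.re = 0 := by
      have hzz : z = (z.re : ℂ) := by apply Complex.ext <;> simp [him]
      rw [hzz] at hz
      have h3 : aeval ((algebraMap ℝ ℂ) z.re) R = 0 := hz
      rw [aeval_algebraMap_apply] at h3
      simpa using h3
    set r := z.re
    obtain ⟨Q, hQ⟩ := dvd_iff_isRoot.mpr hroot
    rcases lt_or_ge r 0 with hr | hr
    · have hQ1 : ∀ y < 0, r < y → 0 ≤ Q.eval y := by
        intro y hy hry
        have := hR y hy
        rw [hQ] at this
        simp only [eval_mul, eval_sub, eval_X, eval_C] at this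
        exact nonneg_of_mul_nonneg_right this (by linarith)
      have hQ2 : ∀ y < r, Q.eval y ≤ 0 := by
        intro y hry
        have := hR y (hry.trans hr)
        rw [hQ] at this
        simp only [eval_mul, eval_sub, eval_X, eval_C] at this
        by_contra hcon
        push Not at hcon
        nlinarith
      have hQr : Q.eval r = 0 := by
        apply le_antisymm
        · have ht : Filter.Tendsto (fun y => Q.eval y) (nhdsWithin r (Set.Iio r))
              (nhds (Q.eval r)) := (Q.continuous.tendsto r).mono_left nhdsWithin_le_nhds
          refine le_of_tendsto ht ?_
          filter_upwards [self_mem_nhdsWithin] with y hy using hQ2 y hy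
        · have ht : Filter.Tendsto (fun y => Q.eval y) (nhdsWithin r (Set.Ioi r))
              (nhds (Q.eval r)) := (Q.continuous.tendsto r).mono_left nhdsWithin_le_nhds
          refine ge_of_tendsto ht ?_
          have h3 : ∀ᶠ y in nhdsWithin r (Set.Ioi r), y < 0 :=
            Filter.Eventually.filter_mono nhdsWithin_le_nhds (Iio_mem_nhds hr)
          filter_upwards [self_mem_nhdsWithin, h3] with y hy hy2 using hQ1 y hy2 hy
      obtain ⟨Q', hQ'⟩ := dvd_iff_isRoot.mpr hQr
      refine quad r 0 Q' (by rw [hQ, hQ']; simp; ring) ?_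
      apply nonneg_of_ne Q' r
      intro y hy hyr
      have := hR y hy
      rw [hQ, hQ'] at this
      simp only [eval_mul, eval_sub, eval_X, eval_C] at this
      rw [← mul_assoc] at this
      exact nonneg_of_mul_nonneg_right this (by
        exact mul_self_pos.mpr (sub_ne_zero.mpr hyr))
    · have hQ0 : Q ≠ 0 := by rintro rfl; simp [hRne] at hQ
      have hdeg : R.natDegree = 1 + Q.natDegree := by
        rw [hQ, natDegree_mul (X_sub_C_ne_zero r) hQ0, natDegree_X_sub_C]
      have hs : (C (√r) : ℝ[X]) ^ 2 = C r := by rw [← C_pow, Real.sq_sqrt hr]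
      have hy : ∀ q : ℝ[X], (q * C (√r)).natDegree ≤ q.natDegree := fun q =>
        natDegree_mul_C_le _ _
      have hx : ∀ q : ℝ[X], (q * X).natDegree ≤ q.natDegree + 1 := fun q =>
        natDegree_mul_le.trans (by rw [natDegree_X])
      have := ih (d - 1) (by omega) (-Q) (by rw [natDegree_neg]; omega) (by
          intro y hy
          have := hR y hy
          rw [hQ] at this
          simp only [eval_mul, eval_sub, eval_X, eval_C] at this
          rw [eval_neg]
          by_contra hcon
          push Not at hcon
          nlinarith)
        (Φ ∘ₗ LinearMap.mulLeft ℝ (C r - X)) (by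
          intro q hq
          have e : (C r - X) * q ^ 2 = (q * C (√r)) ^ 2 + -X * q ^ 2 := by
            rw [mul_pow, hs]; ring
          simp only [LinearMap.comp_apply, LinearMap.mulLeft_apply]
          rw [e, map_add]
          have := hx q; have := hy q
          exact add_nonneg (h1 _ (by omega)) (h2 _ (by omega))) (by
          intro q hq
          have e : (C r - X) * (-X * q ^ 2) = -X * (q * C (√r)) ^ 2 + (q * X) ^ 2 := by
            rw [mul_pow, hs]; ring
          simp only [LinearMap.comp_apply, LinearMap.mulLeft_apply]
          rw [e, map_add]
          have := hx q; have := hy q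
          exact add_nonneg (h2 _ (by omega)) (h1 _ (by omega)))
      have e : R = (C r - X) * (-Q) := by rw [hQ]; ring
      rw [e]
      simpa using this
  · obtain ⟨Q, hQ⟩ := R.quadratic_dvd_of_aeval_eq_zero_im_ne_zero hz him
    have e : (X ^ 2 - C (2 * z.re) * X + C (‖z‖ ^ 2) : ℝ[X])
        = (X - C z.re) ^ 2 + C (z.im ^ 2) := by
      rw [← Complex.normSq_eq_norm_sq, Complex.normSq_apply]
      simp only [C_add, C_mul, C_pow, map_ofNat]
      ring
    rw [e] at hQ
    refine quad z.re z.im Q hQ ?_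
    intro y hy
    have := hR y hy
    rw [hQ] at this
    simp only [eval_mul, eval_add, eval_pow, eval_sub, eval_X, eval_C] at this
    exact nonneg_of_mul_nonneg_right this (by positivity)

open Lagrange in
lemma nodalWeight_map {ι : Type*} [Fintype ι] [DecidableEq ι] (g : ι ↪ ℝ) (s : ι) :
    nodalWeight (Finset.univ.map g) id (g s) = nodalWeight Finset.univ g s := by
  unfold nodalWeight
  rw [← Finset.map_erase, Finset.prod_map]
  rfl

open Lagrange in
lemma nodalWeight_inl {m : ℕ} (a b : Fin m → ℝ) (i : Fin m) :
    nodalWeight Finset.univ (Sum.elim a b) (Sum.inl i)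
      = nodalWeight Finset.univ a i * (∏ k, (a i - b k))⁻¹ := by
  unfold nodalWeight
  have : (Finset.univ : Finset (Fin m ⊕ Fin m)).erase (Sum.inl i)
      = (Finset.univ.erase i).disjSum Finset.univ := by
    ext x; cases x <;> simp
  rw [this, Finset.prod_disjSum, ← Finset.prod_inv_distrib]
  simp

open Lagrange in
lemma nodalWeight_inr {m : ℕ} (a b : Fin m → ℝ) (i : Fin m) :
    nodalWeight Finset.univ (Sum.elim a b) (Sum.inr i)
      = nodalWeight Finset.univ b i * (∏ k, (b i - a k))⁻¹ := by
  unfold nodalWeight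
  have : (Finset.univ : Finset (Fin m ⊕ Fin m)).erase (Sum.inr i)
      = Finset.univ.disjSum (Finset.univ.erase i) := by
    ext x; cases x <;> simp
  rw [this, Finset.prod_disjSum, ← Finset.prod_inv_distrib, mul_comm]
  simp

open Polynomial Lagrange in
lemma key1 (f : ℝ → ℝ) (hm : OperatorMonotone f) {m : ℕ} (T : Finset ℝ)
    (hT : ∀ y ∈ T, 0 ≤ y) (hcard : T.card = 2 * m) (q : ℝ[X]) (hq : q.degree < m) :
    0 ≤ ∑ y ∈ T, q.eval y ^ 2 * f y * nodalWeight T id y := by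
  classical
  set y := T.orderEmbOfFin hcard with hy
  set a : Fin m → ℝ := fun i => y ⟨2 * i, by omega⟩ with ha
  set b : Fin m → ℝ := fun i => y ⟨2 * i + 1, by omega⟩ with hb
  have hab : ∀ i, a i < b i := fun i => y.strictMono (by simp [Fin.lt_def])
  have hba : ∀ i j, i < j → b i < a j := fun i j h => y.strictMono (by
    simp only [Fin.lt_def] at h ⊢; omega)
  have hinj : Function.Injective (Sum.elim a b) := by
    intro s t hst
    rcases s with s | s <;> rcases t with t | t <;> simp only [Sum.elim_inl, Sum.elim_inr] at hst <;>
      have := congrArg Fin.val (y.injective hst) <;> simp only at this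
    · rw [Fin.ext (by omega : s.val = t.val)]
    · omega
    · omega
    · rw [Fin.ext (by omega : s.val = t.val)]
  have hTm : T = Finset.univ.map ⟨Sum.elim a b, hinj⟩ := by
    symm
    apply Finset.eq_of_subset_of_card_le
    · intro x hx
      simp only [Finset.mem_map, Finset.mem_univ, true_and, Function.Embedding.coeFn_mk] at hx
      obtain ⟨s, rfl⟩ := hx
      rcases s with s | s
      · exact T.orderEmbOfFin_mem hcard _
      · exact T.orderEmbOfFin_mem hcard _
    · rw [Finset.card_map, hcard]; simp [two_mul]
  have h0 := key0 f hm a b (fun i => hT _ (T.orderEmbOfFin_mem hcard _)) hab hba q hq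
  refine h0.trans_eq ?_
  have hs : ∑ y ∈ T, q.eval y ^ 2 * f y * nodalWeight T id y
      = ∑ s : Fin m ⊕ Fin m, q.eval (Sum.elim a b s) ^ 2 * f (Sum.elim a b s) *
        nodalWeight Finset.univ (Sum.elim a b) s := by
    rw [hTm, Finset.sum_map]
    refine Finset.sum_congr rfl fun s _ => ?_
    rw [nodalWeight_map]
    rfl
  rw [hs, Fintype.sum_sum_type, add_comm]
  simp only [nodalWeight_inl, nodalWeight_inr, Sum.elim_inl, Sum.elim_inr]

open Lagrange in
lemma nodalWeight_insert (T : Finset ℝ) (x y : ℝ) (hx : x ∉ T) (hy : y ∈ T) :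
    nodalWeight (insert x T) id y = nodalWeight T id y * (y - x)⁻¹ := by
  unfold nodalWeight
  have hxy : x ≠ y := by rintro rfl; exact hx hy
  rw [Finset.erase_insert_of_ne hxy, Finset.prod_insert (by simp [hx]), mul_comm]
  rfl

open Polynomial Lagrange in
lemma key2 (f : ℝ → ℝ) (hnn : ∀ x : ℝ, 0 ≤ x → 0 ≤ f x) (hm : OperatorMonotone f) {m : ℕ}
    (T : Finset ℝ) (hT : ∀ y ∈ T, 0 < y) (hcard : T.card = 2 * m) (q : ℝ[X])
    (hq : q.degree < m) :
    0 ≤ ∑ y ∈ T, -(q.eval y ^ 2 * f y * y⁻¹ * nodalWeight T id y) := by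
  classical
  have h0T : (0 : ℝ) ∉ T := fun h => (hT 0 h).false
  set E1 := ∑ y ∈ T, q.eval y ^ 2 * f y * nodalWeight T id y
  set E2 := ∑ y ∈ T, q.eval y ^ 2 * f y * y⁻¹ * nodalWeight T id y
  set E0 := q.eval 0 ^ 2 * f 0 * ∏ y ∈ T, (0 - y)⁻¹
  have hE0 : 0 ≤ E0 := by
    refine mul_nonneg (mul_nonneg (sq_nonneg _) (hnn 0 le_rfl)) ?_
    have : ∏ y ∈ T, (0 - y)⁻¹ = ∏ y ∈ T, y⁻¹ := by
      have : ∀ y ∈ T, (0 - y)⁻¹ = (-1) * y⁻¹ := fun y _ => by rw [zero_sub, inv_neg]; ring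
      rw [Finset.prod_congr rfl this, Finset.prod_mul_distrib, Finset.prod_const, hcard, pow_mul]
      simp
    rw [this]
    exact Finset.prod_nonneg fun y hy => inv_nonneg.mpr (hT y hy).le
  obtain ⟨M, hM⟩ : ∃ M : ℝ, 0 < M ∧ ∀ y ∈ T, y < M := by
    obtain ⟨M, hM⟩ := T.bddAbove
    refine ⟨max M 0 + 1, by positivity, fun y hy => ?_⟩
    have := hM hy
    linarith [le_max_left M 0]
  have main : ∀ Y, M ≤ Y → 0 ≤ E1 - Y * (E2 + E0) := by
    intro Y hY
    have hY0 : 0 < Y := hM.1.trans_le hY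
    have hYT : Y ∉ insert 0 T := by
      rw [Finset.mem_insert]
      rintro (h | h)
      · exact hY0.ne' h
      · linarith [hM.2 Y h]
    have hdeg : (q * (X - C Y)).degree < ((m + 1 : ℕ) : WithBot ℕ) := by
      rw [degree_mul, degree_X_sub_C]
      by_cases hq0 : q = 0
      · simp [hq0]
      rw [degree_eq_natDegree hq0] at hq ⊢
      norm_cast at hq ⊢
      omega
    have h := key1 f hm (m := m + 1) (insert Y (insert 0 T)) (by
      intro y hy
      simp only [Finset.mem_insert] at hy
      rcases hy with rfl | rfl | h
      · exact hY0.le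
      · exact le_rfl
      · exact (hT y h).le) (by
      rw [Finset.card_insert_of_notMem hYT, Finset.card_insert_of_notMem h0T, hcard]; ring) _ hdeg
    refine h.trans_eq ?_
    rw [Finset.sum_insert hYT, Finset.sum_insert h0T]
    have e0 : nodalWeight (insert Y (insert 0 T)) id 0 = (∏ y ∈ T, (0 - y)⁻¹) * (0 - Y)⁻¹ := by
      rw [nodalWeight_insert _ _ _ hYT (Finset.mem_insert_self _ _)]
      unfold nodalWeight
      rw [Finset.erase_insert h0T]
      rfl
    have e1 : ∀ y ∈ T, eval y (q * (X - C Y)) ^ 2 * f y *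
        nodalWeight (insert Y (insert 0 T)) id y =
        q.eval y ^ 2 * f y * nodalWeight T id y
          - Y * (q.eval y ^ 2 * f y * y⁻¹ * nodalWeight T id y) := by
      intro y hy
      rw [nodalWeight_insert _ _ _ hYT (Finset.mem_insert_of_mem hy),
        nodalWeight_insert _ _ _ h0T hy]
      have hyY : y - Y ≠ 0 := by
        have := hM.2 y hy
        exact (by linarith : y - Y < 0).ne
      have hy0 : y ≠ 0 := (hT y hy).ne'
      simp only [eval_mul, eval_sub, eval_X, eval_C, sub_zero]
      field_simp
    rw [Finset.sum_congr rfl e1, Finset.sum_sub_distrib, ← Finset.mul_sum, e0]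
    simp only [eval_mul, eval_sub, eval_X, eval_C]
    have : (0 - Y) ≠ 0 := by simpa using hY0.ne'
    have e2 : (eval 0 q * (0 - Y)) ^ 2 * f 0 * ((∏ y ∈ T, (0 - y)⁻¹) * (0 - Y)⁻¹)
        = - Y * E0 := by
      simp only [E0]
      generalize (∏ y ∈ T, (0 - y)⁻¹) = p
      field_simp
      ring
    rw [e2]
    ring
  have hE : E2 + E0 ≤ 0 := by
    by_contra hcon
    push Not at hcon
    have h1 := main (max M ((|E1| + 1) / (E2 + E0))) (le_max_left _ _)
    have h2 : |E1| + 1 ≤ max M ((|E1| + 1) / (E2 + E0)) * (E2 + E0) := by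
      rw [← div_le_iff₀ hcon]
      exact le_max_right _ _
    linarith [le_abs_self E1]
  rw [Finset.sum_neg_distrib]
  change 0 ≤ -E2
  linarith

open Polynomial Lagrange in
lemma key3 (f : ℝ → ℝ) (hnn : ∀ x : ℝ, 0 ≤ x → 0 ≤ f x) (hm : OperatorMonotone f) {m : ℕ}
    (hm0 : 0 < m) (T : Finset ℝ) (hT : ∀ y ∈ T, 0 < y) (hcard : T.card = 2 * m) (c : ℝ → ℝ)
    (hc : ∀ z < 0, 0 ≤ ∑ x ∈ T, c x * (x * (x - z)⁻¹)) :
    0 ≤ ∑ x ∈ T, c x * f x := by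
  classical
  set R := interpolate T id (fun x => -(c x * x * (nodalWeight T id x)⁻¹)) with hR
  have hinj : Set.InjOn (id : ℝ → ℝ) T := Function.injective_id.injOn
  have hnw : ∀ x ∈ T, nodalWeight T id x ≠ 0 := fun x hx => nodalWeight_ne_zero hinj hx
  have hRe : ∀ x ∈ T, R.eval x = -(c x * x * (nodalWeight T id x)⁻¹) := fun x hx =>
    eval_interpolate_at_node (v := id) _ hinj hx
  have hRdeg : R.natDegree ≤ 2 * m - 1 := by
    have h := degree_interpolate_lt (fun x => -(c x * x * (nodalWeight T id x)⁻¹)) hinj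
    rw [← hR, hcard] at h
    by_cases h0 : R = 0
    · simp [h0]
    have := (natDegree_lt_iff_degree_lt h0).mpr h
    omega
  have hRpos : ∀ z < 0, 0 ≤ R.eval z := by
    intro z hz
    rw [hR, eval_interpolate_not_at_node (v := id) _ (fun i hi => (hz.trans (hT i hi)).ne), eval_nodal]
    apply mul_nonneg
    · have : ∀ y ∈ T, z - id y = (-1) * (y - z) := fun y _ => by simp
      rw [Finset.prod_congr rfl this, Finset.prod_mul_distrib, Finset.prod_const, hcard, pow_mul]
      simp only [even_two, Even.neg_pow, one_pow, one_mul]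
      exact Finset.prod_nonneg fun y hy => by linarith [hT y hy]
    · refine (hc z hz).trans_eq (Finset.sum_congr rfl fun x hx => ?_)
      have := hnw x hx
      have h3 : z - x = -(x - z) := by ring
      rw [id, h3, inv_neg]
      field_simp
  set Φ : ℝ[X] →ₗ[ℝ] ℝ := ∑ x ∈ T, (-(f x * x⁻¹ * nodalWeight T id x)) • leval x with hΦ
  have hΦe : ∀ p : ℝ[X], Φ p = ∑ x ∈ T, -(f x * x⁻¹ * nodalWeight T id x) * p.eval x := by
    intro p
    simp [hΦ, LinearMap.sum_apply, leval_apply]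
  have hdeg : ∀ q : ℝ[X], q.natDegree < m → q.degree < m := fun q hq =>
    (degree_le_natDegree).trans_lt (by exact_mod_cast hq)
  have := pos_poly (2 * m - 1) R hRdeg hRpos Φ (by
    intro q hq
    refine (key2 f hnn hm T hT hcard q (hdeg q (by omega))).trans_eq ?_
    rw [hΦe]
    refine Finset.sum_congr rfl fun x hx => ?_
    rw [eval_pow]; ring) (by
    intro q hq
    refine (key1 f hm T (fun y hy => (hT y hy).le) hcard q (hdeg q (by omega))).trans_eq ?_
    rw [hΦe]
    refine Finset.sum_congr rfl fun x hx => ?_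
    have := (hT x hx).ne'
    simp only [eval_mul, eval_neg, eval_X, eval_pow]
    field_simp)
  refine this.trans_eq ?_
  rw [hΦe]
  refine Finset.sum_congr rfl fun x hx => ?_
  rw [hRe x hx]
  have := (hT x hx).ne'
  have := hnw x hx
  field_simp

lemma key4 (f : ℝ → ℝ) (hnn : ∀ x : ℝ, 0 ≤ x → 0 ≤ f x) (hm : OperatorMonotone f)
    (T : Finset ℝ) (hT : ∀ y ∈ T, 0 < y) (c : ℝ → ℝ)
    (hc : ∀ z < 0, 0 ≤ ∑ x ∈ T, c x * (x * (x - z)⁻¹)) :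
    0 ≤ ∑ x ∈ T, c x * f x := by
  classical
  rcases T.eq_empty_or_nonempty with rfl | hne
  · simp
  rcases Nat.even_or_odd' T.card with ⟨k, hk | hk⟩
  · exact key3 f hnn hm (by have := hne.card_pos; omega) T hT hk c hc
  · obtain ⟨M, hM⟩ := T.bddAbove
    obtain ⟨x0, hx0⟩ := hne
    have hM0 : 0 < M := (hT x0 hx0).trans_le (hM hx0)
    have hMT : M + 1 ∉ T := fun h => by linarith [hM h]
    have := key3 f hnn hm (m := k + 1) (by omega) (insert (M + 1) T) (by
      intro y hy
      rcases Finset.mem_insert.mp hy with rfl | h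
      · linarith
      · exact hT y h) (by rw [Finset.card_insert_of_notMem hMT]; omega)
      (fun x => if x = M + 1 then 0 else c x) (by
        intro z hz
        rw [Finset.sum_insert hMT]
        simp only [if_true, zero_mul, zero_add]
        refine (hc z hz).trans_eq (Finset.sum_congr rfl fun x hx => ?_)
        rw [if_neg (by rintro rfl; exact hMT hx)])
    rw [Finset.sum_insert hMT] at this
    simp only [if_true, zero_mul, zero_add] at this
    refine this.trans_eq (Finset.sum_congr rfl fun x hx => ?_)
    rw [if_neg (by rintro rfl; exact hMT hx)]

lemma whm_of_pos {t x : ℝ} (hx : 0 < x) : whm t x = x / ((1 - t) * x + t) := by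
  unfold whm
  rw [if_neg (fun h => hx.ne' h.2)]

lemma whm_den_pos {t x : ℝ} (ht : t ∈ Set.Icc (0 : ℝ) 1) (hx : 0 < x) :
    0 < (1 - t) * x + t := by
  rcases ht.1.eq_or_lt with h | h
  · rw [← h]; simpa using hx
  · have : 0 ≤ (1 - t) * x := mul_nonneg (by linarith [ht.2]) hx.le
    linarith

open CompactlySupported in
/-- The function `t ↦ 1 !_t x` as a compactly supported continuous function. -/
noncomputable def hmap (x : Set.Ioi (0 : ℝ)) : C_c(Set.Icc (0 : ℝ) 1, ℝ) where
  toFun t := whm t x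
  continuous_toFun := by
    have : (fun t : Set.Icc (0 : ℝ) 1 => whm t x)
      = fun t : Set.Icc (0 : ℝ) 1 => (x : ℝ) / ((1 - (t : ℝ)) * x + t) := by
      ext t; exact whm_of_pos x.2
    rw [this]
    exact Continuous.div (by fun_prop) (by fun_prop) (fun t => (whm_den_pos t.2 x.2).ne')
  hasCompactSupport' := HasCompactSupport.of_compactSpace _

open CompactlySupported in
theorem pos_part (f : ℝ → ℝ)
    (hpos : ∀ (T : Finset ℝ), (∀ y ∈ T, 0 < y) → ∀ (c : ℝ → ℝ),
      (∀ z < 0, 0 ≤ ∑ x ∈ T, c x * (x * (x - z)⁻¹)) → 0 ≤ ∑ x ∈ T, c x * f x) :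
    ∃ μ : Measure (Set.Icc (0 : ℝ) 1), IsFiniteMeasure μ ∧
      ∀ x : ℝ, 0 < x → f x = ∫ t : Set.Icc (0 : ℝ) 1, whm (t : ℝ) x ∂μ := by
  classical
  set E := C_c(Set.Icc (0 : ℝ) 1, ℝ)
  set H : (Set.Ioi (0 : ℝ) →₀ ℝ) →ₗ[ℝ] E := Finsupp.linearCombination ℝ hmap with hH
  set F : (Set.Ioi (0 : ℝ) →₀ ℝ) →ₗ[ℝ] ℝ :=
    Finsupp.linearCombination ℝ (fun x : Set.Ioi (0 : ℝ) => f x) with hF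
  have hHe : ∀ c t, H c t = ∑ x ∈ c.support, c x * whm t x := by
    intro c t
    rw [hH, Finsupp.linearCombination_apply, Finsupp.sum, CompactlySupportedContinuousMap.coe_sum,
      Finset.sum_apply]
    rfl
  have hFp : ∀ c, (∀ t, 0 ≤ H c t) → 0 ≤ F c := by
    intro c hc
    set c' : ℝ → ℝ := fun x => if h : 0 < x then c ⟨x, h⟩ else 0 with hc'
    have hcc : ∀ x : Set.Ioi (0 : ℝ), c' x = c x := fun x => by
      have := x.2
      simp only [Set.mem_Ioi] at this
      simp [hc', this]
    have := hpos (c.support.map (Function.Embedding.subtype _)) (by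
      intro y hy
      simp only [Finset.mem_map] at hy
      obtain ⟨x, _, rfl⟩ := hy
      exact x.2) c' (by
      intro z hz
      have h1z : 0 < 1 - z := by linarith
      have ht : -z / (1 - z) ∈ Set.Icc (0 : ℝ) 1 :=
        ⟨div_nonneg (by linarith) h1z.le, by rw [div_le_one h1z]; linarith⟩
      have h := hc ⟨_, ht⟩
      rw [hHe] at h
      rw [Finset.sum_map]
      have h2 : ∑ x ∈ c.support, c x * whm (-z / (1 - z)) x
        = (1 - z) * ∑ x ∈ c.support, c' x * ((x : ℝ) * ((x : ℝ) - z)⁻¹) := by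
        rw [Finset.mul_sum]
        refine Finset.sum_congr rfl fun x _ => ?_
        have hx : 0 < (x : ℝ) := x.2
        have hxz : 0 < (x : ℝ) - z := by linarith
        rw [hcc, whm_of_pos hx]
        have : (1 - -z / (1 - z)) * (x : ℝ) + -z / (1 - z) = (x - z) / (1 - z) := by
          field_simp; ring
        rw [this]
        field_simp
      rw [h2] at h
      exact nonneg_of_mul_nonneg_right h h1z)
    rw [Finset.sum_map] at this
    refine this.trans_eq ?_
    rw [hF, Finsupp.linearCombination_apply, Finsupp.sum]
    refine Finset.sum_congr rfl fun x _ => ?_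
    simp only [Function.Embedding.subtype_apply, hcc, smul_eq_mul]
  obtain ⟨G, hG⟩ : ∃ G : E →ₗ[ℝ] ℝ, ∀ c, G (H c) = F c := by
    have : F ∈ LinearMap.range H.dualMap := by
      rw [LinearMap.range_dualMap_eq_dualAnnihilator_ker, Submodule.mem_dualAnnihilator]
      intro c hc
      rw [LinearMap.mem_ker] at hc
      apply le_antisymm
      · have := hFp (-c) (by intro t; rw [map_neg, hc, neg_zero]; exact le_refl (0 : ℝ))
        rw [map_neg] at this
        linarith
      · exact hFp c (by intro t; rw [hc]; exact le_refl (0 : ℝ))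
    obtain ⟨G, hG⟩ := this
    exact ⟨G, fun c => by rw [← hG]; rfl⟩
  let K : PointedCone ℝ E :=
    { carrier := {g | ∀ t, 0 ≤ g t}
      add_mem' := fun {a b} ha hb t => add_nonneg (ha t) (hb t)
      zero_mem' := fun t => le_refl (0 : ℝ)
      smul_mem' := fun r g hg t => by
        have : (r • g) t = (r : ℝ) * g t := rfl
        rw [this]
        exact mul_nonneg r.2 (hg t) }
  obtain ⟨Λ, hΛ1, hΛ2⟩ := riesz_extension K ⟨LinearMap.range H, G.domRestrict (LinearMap.range H)⟩
    (by
      rintro ⟨g, c, rfl⟩ hg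
      have : 0 ≤ G (H c) := by rw [hG]; exact hFp c hg
      exact this)
    (by
      intro g
      obtain ⟨M, hM⟩ : ∃ M : ℝ, ∀ t, |g t| ≤ M := by
        obtain ⟨M, hM⟩ := (isCompact_range g.continuous).isBounded.exists_norm_le
        exact ⟨M, fun t => hM _ ⟨t, rfl⟩⟩
      refine ⟨⟨H (Finsupp.single ⟨1, by simp⟩ M), ⟨_, rfl⟩⟩, ?_⟩
      intro t
      have : H (Finsupp.single ⟨1, by simp⟩ M) t = M := by
        rw [hH, Finsupp.linearCombination_single]
        have : (M • hmap ⟨1, by simp⟩) t = M * whm t 1 := rfl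
        rw [this, whm_of_pos one_pos]
        simp
      have h2 : (H (Finsupp.single ⟨1, by simp⟩ M) + g) t
        = H (Finsupp.single ⟨1, by simp⟩ M) t + g t := rfl
      change 0 ≤ (H (Finsupp.single ⟨1, by simp⟩ M) + g) t
      rw [h2, this]
      linarith [neg_abs_le (g t), hM t])
  let Λ' : E →ₚ[ℝ] ℝ := PositiveLinearMap.mk₀ Λ (fun g hg => hΛ2 g (fun t => hg t))
  refine ⟨RealRMK.rieszMeasure Λ', ?_, ?_⟩
  · infer_instance
  · intro x hx
    have h1 := RealRMK.integral_rieszMeasure Λ' (hmap ⟨x, hx⟩)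
    have h2 : Λ' (hmap ⟨x, hx⟩) = f x := by
      have h3 := hΛ1 ⟨H (Finsupp.single ⟨x, hx⟩ 1), ⟨_, rfl⟩⟩
      have h4 : G (H (Finsupp.single ⟨x, hx⟩ 1)) = f x := by
        rw [hG, hF, Finsupp.linearCombination_single]; simp
      have h5 : H (Finsupp.single ⟨x, hx⟩ 1) = hmap ⟨x, hx⟩ := by
        rw [hH, Finsupp.linearCombination_single, one_smul]
      have h6 : Λ (H (Finsupp.single ⟨x, hx⟩ 1)) = G (H (Finsupp.single ⟨x, hx⟩ 1)) := h3
      rw [h4, h5] at h6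
      exact h6
    rw [← h2, ← h1]
    rfl

lemma whm_bound {t x : ℝ} (ht : t ∈ Set.Icc (0 : ℝ) 1) (hx : 0 < x) (hx1 : x ≤ 1) :
    ‖whm t x‖ ≤ 1 := by
  have hd := whm_den_pos ht hx
  rw [whm_of_pos hx, Real.norm_eq_abs, abs_of_nonneg (div_nonneg hx.le hd.le), div_le_one hd]
  nlinarith [ht.1]

theorem stmt2 (f : ℝ → ℝ) (hc : ContinuousOn f (Set.Ici 0))
    (hnn : ∀ x : ℝ, 0 ≤ x → 0 ≤ f x) (hm : OperatorMonotone f) :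
    ∃ μ : Measure (Set.Icc (0 : ℝ) 1), IsFiniteMeasure μ ∧
      ∀ x : ℝ, 0 ≤ x → f x = ∫ t : Set.Icc (0 : ℝ) 1, whm (t : ℝ) x ∂μ := by
  obtain ⟨μ, hμ, h⟩ := pos_part f (fun T hT c hcc => key4 f hnn hm T hT c hcc)
  refine ⟨μ, hμ, fun x hx => ?_⟩
  rcases hx.lt_or_eq with hx | rfl
  · exact h x hx
  have h1 : Filter.Tendsto f (nhdsWithin 0 (Set.Ioi 0)) (nhds (f 0)) :=
    (hc 0 (by simp)).mono_left (nhdsWithin_mono _ Set.Ioi_subset_Ici_self)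
  have hmem : ∀ᶠ x : ℝ in nhdsWithin 0 (Set.Ioi 0), 0 < x ∧ x ≤ 1 := by
    filter_upwards [Ioc_mem_nhdsGT (zero_lt_one (α := ℝ))] with x hx using hx
  have h2 : Filter.Tendsto (fun x : ℝ => ∫ t : Set.Icc (0 : ℝ) 1, whm (t : ℝ) x ∂μ)
      (nhdsWithin 0 (Set.Ioi 0)) (nhds (∫ t : Set.Icc (0 : ℝ) 1, whm (t : ℝ) 0 ∂μ)) := by
    refine tendsto_integral_filter_of_dominated_convergence (fun _ => (1 : ℝ)) ?_ ?_
      (integrable_const _) ?_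
    · filter_upwards [hmem] with x hx
      exact (hmap ⟨x, hx.1⟩).continuous.aestronglyMeasurable
    · filter_upwards [hmem] with x hx
      exact Filter.Eventually.of_forall fun t => whm_bound t.2 hx.1 hx.2
    · refine Filter.Eventually.of_forall fun t => ?_
      by_cases ht : (t : ℝ) = 0
      · refine tendsto_const_nhds.congr' ?_
        filter_upwards [hmem] with x hx
        rw [whm_of_pos hx.1, ht]
        simp [whm, hx.1.ne']
      · have hcont : ContinuousAt (fun x : ℝ => x / ((1 - (t : ℝ)) * x + t)) 0 := by
          apply ContinuousAt.div (by fun_prop) (by fun_prop)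
          simpa using ht
        have h3 : whm (t : ℝ) 0 = (fun x : ℝ => x / ((1 - (t : ℝ)) * x + t)) 0 := by
          simp [whm, ht]
        rw [h3]
        refine (hcont.tendsto.mono_left nhdsWithin_le_nhds).congr' ?_
        filter_upwards [hmem] with x hx
        rw [whm_of_pos hx.1]
  refine tendsto_nhds_unique h1 (h2.congr' ?_)
  filter_upwards [hmem] with x hx
  exact (h x hx.1).symm
end

section
/- A continuous function f : [0,∞) → [0,∞) is operator monotone if and only if there exists a finite Borel measure ν on the extended half-line [0,∞] such that f(x) = ∫_{[0,∞]} φ(x,λ) dν(λ) for all x ∈ [0,∞), where φ(x,λ) = x(λ+1)/(x+λ) for λ ∈ (0,∞), φ(x,0) = 1, and φ(x,∞) = x. -/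
open MeasureTheory Real ComplexOrder ENNReal

/-- The integrand `φ(x, λ) = x(λ+1)/(x+λ)` for `λ ∈ (0,∞)`, with `φ(x,0) = 1` and
`φ(x,∞) = x`. -/
noncomputable def phi (x : ℝ) (l : ℝ≥0∞) : ℝ :=
  if l = 0 then 1 else if l = ⊤ then x else x * (l.toReal + 1) / (x + l.toReal)

namespace LownerAux

open Matrix

lemma cfc_conj {n : ℕ} (U : Matrix (Fin n) (Fin n) ℂ) (hU : Uᴴ * U = 1) (d : Fin n → ℝ)
    (f : ℝ → ℝ) :
    cfc f (U * diagonal (fun i => (d i : ℂ)) * Uᴴ) =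
      U * diagonal (fun i => (f (d i) : ℂ)) * Uᴴ := by
  classical
  have hU' : U * Uᴴ = 1 := mul_eq_one_comm.mp hU
  set A := U * diagonal (fun i => (d i : ℂ)) * Uᴴ with hA
  have hAh : IsSelfAdjoint A := by
    rw [IsSelfAdjoint, star_eq_conjTranspose, hA]
    simp only [conjTranspose_mul, conjTranspose_conjTranspose, diagonal_conjTranspose,
      Matrix.mul_assoc]
    congr 3
    ext i
    simp
  have hpol : ∀ P : Polynomial ℝ, Polynomial.aeval A P =
      U * diagonal (fun i => ((P.eval (d i) : ℝ) : ℂ)) * Uᴴ := by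
    intro P
    induction P using Polynomial.induction_on' with
    | add p q hp hq =>
      rw [map_add, hp, hq, ← Matrix.add_mul, ← Matrix.mul_add, diagonal_add]
      simp
    | monomial k a =>
      have hk : A ^ k = U * diagonal (fun i => ((d i : ℂ)) ^ k) * Uᴴ := by
        induction k with
        | zero => simp [hU']
        | succ k ih =>
          rw [pow_succ, ih, hA]
          calc U * diagonal (fun i => ((d i : ℂ)) ^ k) * Uᴴ * (U * diagonal (fun i => (d i : ℂ)) * Uᴴ)
              = U * diagonal (fun i => ((d i : ℂ)) ^ k) * (Uᴴ * U) * diagonal (fun i => (d i : ℂ)) * Uᴴ := by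
                simp only [Matrix.mul_assoc]
            _ = _ := by
                rw [hU, Matrix.mul_one, Matrix.mul_assoc U, diagonal_mul_diagonal]
                simp [pow_succ]
      rw [Polynomial.aeval_monomial, hk, ← Algebra.smul_def, ← Matrix.smul_mul, ← Matrix.mul_smul]
      congr 2
      ext i j
      by_cases h : i = j <;> simp [h, diagonal]
  -- interpolate
  let s : Finset ℝ := Finset.univ.image d
  let P : Polynomial ℝ := Lagrange.interpolate s id f
  have hP : ∀ i, P.eval (d i) = f (d i) := fun i => by
    have := Lagrange.eval_interpolate_at_node (s := s) (v := id) (i := d i) f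
      (Function.injective_id.injOn) (by simp [s])
    simpa only [id] using this
  have hspec : ∀ x ∈ spectrum ℝ A, x ∈ s := by
    intro x hx
    have h1 : Polynomial.aeval A (∏ y ∈ s, (Polynomial.X - Polynomial.C y)) = 0 := by
      rw [hpol]
      have : (fun i => (((∏ y ∈ s, (Polynomial.X - Polynomial.C y)).eval (d i) : ℝ) : ℂ)) = 0 := by
        ext i
        rw [Polynomial.eval_prod, Finset.prod_eq_zero (i := d i)] <;> simp [s]
      rw [this]; simp
    have h2 := spectrum.subset_polynomial_aeval A (∏ y ∈ s, (Polynomial.X - Polynomial.C y))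
      ⟨x, hx, rfl⟩
    rw [h1] at h2
    have hne : Nontrivial (Matrix (Fin n) (Fin n) ℂ) := by
      by_contra hcon
      rw [not_nontrivial_iff_subsingleton] at hcon
      simp [spectrum.of_subsingleton] at hx
    rw [spectrum.zero_eq] at h2
    simp only [Set.mem_singleton_iff, Polynomial.eval_prod] at h2
    rw [Finset.prod_eq_zero_iff] at h2
    obtain ⟨y, hy, h⟩ := h2
    simp at h
    have : x = y := by linarith
    exact this ▸ hy
  have h3 : cfc f A = cfc P.eval A := by
    apply cfc_congr
    intro x hx
    obtain ⟨i, -, rfl⟩ := Finset.mem_image.mp (hspec x hx)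
    exact (hP i).symm
  rw [h3, cfc_polynomial P A hAh, hpol]
  simp only [hP]

lemma spectral {n : ℕ} {A : Matrix (Fin n) (Fin n) ℂ} (hA : A.PosSemidef) :
    ∃ (U : Matrix (Fin n) (Fin n) ℂ) (d : Fin n → ℝ), Uᴴ * U = 1 ∧ (∀ i, 0 ≤ d i) ∧
      A = U * diagonal (fun i => (d i : ℂ)) * Uᴴ := by
  refine ⟨hA.1.eigenvectorUnitary, hA.1.eigenvalues, ?_, hA.eigenvalues_nonneg, ?_⟩
  · exact Unitary.coe_star_mul_self hA.1.eigenvectorUnitary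
  · conv_lhs => rw [hA.1.spectral_theorem]
    rfl

lemma quad {n : ℕ} {A : Matrix (Fin n) (Fin n) ℂ} (hA : A.PosSemidef) (v : Fin n → ℂ) :
    ∃ (d w : Fin n → ℝ), (∀ i, 0 ≤ d i) ∧ ∀ f : ℝ → ℝ,
      star v ⬝ᵥ (cfc f A *ᵥ v) = ((∑ i, f (d i) * w i : ℝ) : ℂ) := by
  obtain ⟨U, d, hU, hd, rfl⟩ := spectral hA
  refine ⟨d, fun i => Complex.normSq ((Uᴴ *ᵥ v) i), hd, fun f => ?_⟩
  rw [cfc_conj U hU, ← Matrix.mulVec_mulVec, ← Matrix.mulVec_mulVec, Matrix.dotProduct_mulVec]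
  have : star v ᵥ* U = star (Uᴴ *ᵥ v) := by
    rw [Matrix.star_mulVec, conjTranspose_conjTranspose]
  rw [this]
  simp only [dotProduct, mulVec_diagonal]
  push_cast
  refine Finset.sum_congr rfl fun i _ => ?_
  rw [Complex.normSq_eq_conj_mul_self]
  simp only [Pi.star_apply, RCLike.star_def]
  ring

lemma inv_anti {n : ℕ} {A B : Matrix (Fin n) (Fin n) ℂ} (hA : A.PosDef) (hB : B.PosDef)
    (h : (B - A).PosSemidef) : (A⁻¹ - B⁻¹).PosSemidef := by
  have hAi := hA.inv
  let _ : Invertible B := hB.isUnit.invertible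
  let _ : Invertible A⁻¹ := hAi.isUnit.invertible
  have h1 := Matrix.PosDef.fromBlocks₁₁ (1 : Matrix (Fin n) (Fin n) ℂ) A⁻¹ hB
  have h2 := Matrix.PosDef.fromBlocks₂₂ B (1 : Matrix (Fin n) (Fin n) ℂ) hAi
  have : A⁻¹⁻¹ = A := Matrix.nonsing_inv_nonsing_inv A ((Matrix.isUnit_iff_isUnit_det A).mp hA.isUnit)
  simp only [conjTranspose_one, Matrix.one_mul, Matrix.mul_one, this] at h1 h2
  exact h1.mp (h2.mpr h)

lemma resolvent_eq {n : ℕ} {A : Matrix (Fin n) (Fin n) ℂ} (hA : A.PosSemidef) {t : ℝ}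
    (ht : 0 < t) :
    cfc (fun x => x * (t + 1) / (x + t)) A =
      ((t + 1 : ℝ) : ℂ) • (1 - (t : ℂ) • (A + (t : ℂ) • (1 : Matrix (Fin n) (Fin n) ℂ))⁻¹) := by
  obtain ⟨U, d, hU, hd, rfl⟩ := spectral hA
  have hU' : U * Uᴴ = 1 := mul_eq_one_comm.mp hU
  have hne : ∀ i, (d i : ℂ) + t ≠ 0 := fun i => by
    have : d i + t ≠ 0 := by have := hd i; positivity
    exact_mod_cast this
  have hdiag : ∀ g : Fin n → ℂ, ∀ h : Fin n → ℂ,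
      (U * diagonal g * Uᴴ) * (U * diagonal h * Uᴴ) = U * diagonal (fun i => g i * h i) * Uᴴ := by
    intro g h
    calc _ = U * diagonal g * (Uᴴ * U) * diagonal h * Uᴴ := by simp only [Matrix.mul_assoc]
      _ = _ := by rw [hU, Matrix.mul_one, Matrix.mul_assoc U, diagonal_mul_diagonal]
  have hone : (1 : Matrix (Fin n) (Fin n) ℂ) = U * diagonal (fun _ => 1) * Uᴴ := by
    rw [Matrix.diagonal_one, Matrix.mul_one, hU']
  have hsm : ∀ (c : ℂ) (g : Fin n → ℂ), c • (U * diagonal g * Uᴴ) = U * diagonal (c • g) * Uᴴ := by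
    intro c g
    rw [← Matrix.smul_mul, ← Matrix.mul_smul, Matrix.diagonal_smul]
  have hinv : (U * diagonal (fun i => (d i : ℂ)) * Uᴴ + (t : ℂ) • (1 : Matrix (Fin n) (Fin n) ℂ))⁻¹
      = U * diagonal (fun i => ((d i : ℂ) + t)⁻¹) * Uᴴ := by
    apply Matrix.inv_eq_right_inv
    rw [hone, hsm, ← Matrix.add_mul, ← Matrix.mul_add, diagonal_add, hdiag]
    congr 3
    ext i
    simp [hne i]
  rw [hinv, cfc_conj U hU, hone, hsm, ← Matrix.sub_mul, ← Matrix.mul_sub, diagonal_sub, hsm]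
  congr 3
  ext i
  have := hne i
  simp
  field_simp
  ring

lemma om_phi (l : ℝ≥0∞) : OperatorMonotone (fun x => phi x l) := by
  intro n A B hA hB hAB
  have hAs : IsSelfAdjoint A := hA.1
  have hBs : IsSelfAdjoint B := hB.1
  by_cases h0 : l = 0
  · have : (fun x => phi x l) = fun _ => 1 := by ext x; simp [phi, h0]
    rw [this, cfc_const_one ℝ A, cfc_const_one ℝ B, sub_self]
    exact PosSemidef.zero
  by_cases ht : l = ⊤
  · have : (fun x => phi x l) = id := by ext x; simp [phi, ht]
    rw [this, cfc_id ℝ A, cfc_id ℝ B]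
    exact hAB
  have hl : 0 < l.toReal := ENNReal.toReal_pos h0 ht
  have : (fun x => phi x l) = fun x => x * (l.toReal + 1) / (x + l.toReal) := by
    ext x; simp [phi, h0, ht]
  rw [this, resolvent_eq hA hl, resolvent_eq hB hl]
  set t := l.toReal
  have htC : (0 : ℂ) < (t : ℂ) := by exact_mod_cast hl
  have hp : ((t : ℂ) • (1 : Matrix (Fin n) (Fin n) ℂ)).PosDef := PosDef.one.smul htC
  have h1 := inv_anti (Matrix.PosDef.posSemidef_add hA hp) (Matrix.PosDef.posSemidef_add hB hp)
    (by simpa using hAB)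
  have h2 : (0 : ℂ) ≤ ((t + 1 : ℝ) : ℂ) * t := by
    have : 0 ≤ (t + 1) * t := by positivity
    exact_mod_cast this
  convert h1.smul h2 using 1
  rw [mul_smul, ← smul_sub]
  congr 1
  rw [smul_sub]
  abel

lemma phi_measurable (x : ℝ) : Measurable (phi x) := by
  unfold phi
  refine Measurable.ite (measurableSet_singleton 0) measurable_const ?_
  refine Measurable.ite (measurableSet_singleton ⊤) measurable_const ?_
  fun_prop

lemma phi_nonneg {x : ℝ} (hx : 0 ≤ x) (l : ℝ≥0∞) : 0 ≤ phi x l := by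
  unfold phi
  split_ifs
  · exact zero_le_one
  · exact hx
  · positivity

lemma phi_le {x : ℝ} (hx : 0 ≤ x) (l : ℝ≥0∞) : phi x l ≤ 1 + x := by
  unfold phi
  split_ifs with h0 ht
  · linarith
  · linarith
  · have hl : 0 < l.toReal := ENNReal.toReal_pos h0 ht
    rw [div_le_iff₀ (by positivity)]
    nlinarith

lemma phi_integrable {x : ℝ} (hx : 0 ≤ x) (ν : Measure ℝ≥0∞) [IsFiniteMeasure ν] :
    Integrable (phi x) ν := by
  refine Integrable.of_bound (phi_measurable x).aestronglyMeasurable (1 + x) ?_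
  refine Filter.Eventually.of_forall fun l => ?_
  rw [Real.norm_of_nonneg (phi_nonneg hx l)]
  exact phi_le hx l

lemma om_of_measure (f : ℝ → ℝ) (ν : Measure ℝ≥0∞) [IsFiniteMeasure ν]
    (h : ∀ x : ℝ, 0 ≤ x → f x = ∫ l, phi x l ∂ν) : OperatorMonotone f := by
  intro n A B hA hB hAB
  refine PosSemidef.of_dotProduct_mulVec_nonneg ?_ fun v => ?_
  · exact IsSelfAdjoint.sub (cfc_predicate f B) (cfc_predicate f A)
  obtain ⟨a, w, ha, hw⟩ := quad hA v
  obtain ⟨b, u, hb, hu⟩ := quad hB v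
  rw [Matrix.sub_mulVec, dotProduct_sub, hw, hu, ← Complex.ofReal_sub]
  have key : ∀ l, 0 ≤ ∑ i, phi (b i) l * u i - ∑ i, phi (a i) l * w i := by
    intro l
    have := (om_phi l n A B hA hB hAB).dotProduct_mulVec_nonneg v
    rw [Matrix.sub_mulVec, dotProduct_sub, hw, hu, ← Complex.ofReal_sub] at this
    exact_mod_cast this
  have e1 : ∀ (a w : Fin n → ℝ), (∀ i, 0 ≤ a i) →
      Integrable (fun l => ∑ i, phi (a i) l * w i) ν ∧
      ∑ i, f (a i) * w i = ∫ l, ∑ i, phi (a i) l * w i ∂ν := by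
    intro a w ha
    have hi : ∀ i, Integrable (fun l => phi (a i) l * w i) ν :=
      fun i => (phi_integrable (ha i) ν).mul_const _
    refine ⟨integrable_finsetSum _ fun i _ => hi i, ?_⟩
    rw [integral_finsetSum _ fun i _ => hi i]
    refine Finset.sum_congr rfl fun i _ => ?_
    rw [h _ (ha i), integral_mul_const]
  have : 0 ≤ ∑ i, f (b i) * u i - ∑ i, f (a i) * w i := by
    rw [(e1 a w ha).2, (e1 b u hb).2, ← integral_sub (e1 b u hb).1 (e1 a w ha).1]
    exact integral_nonneg key
  exact_mod_cast this

end LownerAux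
namespace LownerAux

open Matrix Polynomial

lemma lagrange_sum (S : Finset ℝ) {m : ℕ} (hm : S.card = 2 * m) (P : ℝ[X])
    (hP : P.natDegree < 2 * m) :
    ∑ x ∈ S, (∏ y ∈ S.erase x, (x - y))⁻¹ * P.eval x = P.coeff (2 * m - 1) := by
  have h := Lagrange.coeff_eq_sum (s := S) (v := id) (P := P) Function.injective_id.injOn
    (by
      rw [hm]
      refine lt_of_le_of_lt degree_le_natDegree ?_
      exact_mod_cast hP)
  rw [hm] at h
  rw [h]
  refine Finset.sum_congr rfl fun x _ => ?_
  simp only [id]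
  rw [div_eq_mul_inv, mul_comm]

/-- weighted transposed Vandermonde matrix -/
noncomputable def W (m : ℕ) (w : ℝ → ℝ) (σ : Fin m → ℝ) : Matrix (Fin m) (Fin m) ℂ :=
  of fun k i => ((√|w (σ i)| * (σ i) ^ (k : ℕ) : ℝ) : ℂ)

lemma W_diag (m : ℕ) (w : ℝ → ℝ) (σ : Fin m → ℝ) (g : ℝ → ℝ) :
    W m w σ * diagonal (fun i => (g (σ i) : ℂ)) * (W m w σ)ᴴ =
      of fun k l : Fin m => ((∑ i, |w (σ i)| * (g (σ i) * (σ i) ^ ((k : ℕ) + l)) : ℝ) : ℂ) := by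
  ext k l
  rw [Matrix.mul_apply]
  simp only [mul_diagonal, W, of_apply, conjTranspose_apply, RCLike.star_def, Complex.conj_ofReal]
  push_cast
  refine Finset.sum_congr rfl fun i _ => ?_
  have : ((|w (σ i)| : ℝ) : ℂ) = (√|w (σ i)| : ℂ) * (√|w (σ i)| : ℂ) := by
    rw [← Complex.ofReal_mul, Real.mul_self_sqrt (abs_nonneg _)]
  rw [this, pow_add]
  ring

lemma W_isUnit (m : ℕ) (w : ℝ → ℝ) (σ : Fin m → ℝ) (hσ : Function.Injective σ)
    (hw : ∀ i, w (σ i) ≠ 0) : IsUnit (W m w σ).det := by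
  have : W m w σ = (vandermonde (fun i => (σ i : ℂ)))ᵀ *
      diagonal (fun i => ((√|w (σ i)| : ℝ) : ℂ)) := by
    ext k i
    simp only [W, of_apply, mul_diagonal, transpose_apply, vandermonde_apply]
    push_cast
    ring
  rw [this, det_mul, det_transpose, det_diagonal, isUnit_iff_ne_zero]
  refine mul_ne_zero ?_ ?_
  · rw [det_vandermonde_ne_zero_iff]
    intro i j h
    exact hσ (Complex.ofReal_injective h)
  · rw [Finset.prod_ne_zero_iff]
    intro i _
    have : 0 < √|w (σ i)| := Real.sqrt_pos.mpr (abs_pos.mpr (hw i))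
    exact_mod_cast this.ne'

lemma card_side (S : Finset ℝ) {m : ℕ} (hm : S.card = 2 * m) (hm0 : 0 < m) (w : ℝ → ℝ)
    (hw : ∀ x ∈ S, w x ≠ 0)
    (hsum : ∀ P : ℝ[X], P.natDegree < 2 * m - 1 → ∑ x ∈ S, w x * P.eval x = 0) :
    m ≤ (S.filter fun x => 0 < w x).card := by
  by_contra hlt
  push Not at hlt
  set Q : ℝ[X] := ∏ x ∈ S.filter (fun x => 0 < w x), (X - C x) with hQ
  have hdeg : Q.natDegree = (S.filter fun x => 0 < w x).card := by
    rw [hQ, natDegree_prod_of_monic _ _ fun x _ => monic_X_sub_C x]; simp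
  have h0 := hsum (Q ^ 2) (by rw [natDegree_pow, hdeg]; omega)
  have hle : ∀ x ∈ S, w x * (Q ^ 2).eval x ≤ 0 := by
    intro x hx
    rcases lt_or_gt_of_ne (hw x hx) with h | h
    · rw [eval_pow]; exact mul_nonpos_of_nonpos_of_nonneg h.le (sq_nonneg _)
    · have : Q.eval x = 0 := by
        rw [hQ, eval_prod, Finset.prod_eq_zero (i := x)] <;> simp [hx, h]
      simp [this]
  have h1 := (Finset.sum_eq_zero_iff_of_nonpos hle).mp h0
  have h2 : ∀ x ∈ S, 0 < w x := by
    intro x hx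
    by_contra hneg
    have := h1 x hx
    rw [eval_pow, mul_eq_zero] at this
    rcases this with h | h
    · exact hw x hx h
    · have h3 : Q.eval x = 0 := by simpa using h
      rw [hQ, eval_prod, Finset.prod_eq_zero_iff] at h3
      obtain ⟨y, hy, h4⟩ := h3
      have : x = y := by simpa [sub_eq_zero] using h4
      subst this
      exact hneg (Finset.mem_filter.mp hy).2
  rw [Finset.filter_true_of_mem h2] at hlt
  omega

lemma quad_coeff (S : Finset ℝ) (m : ℕ) (w f : ℝ → ℝ) (a : ℝ[X]) (ha : a.natDegree < m) :
    star (fun k : Fin m => (a.coeff k : ℂ)) ⬝ᵥ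
      ((of fun k l : Fin m => ((∑ x ∈ S, w x * (f x * x ^ ((k : ℕ) + l)) : ℝ) : ℂ)) *ᵥ
        (fun k : Fin m => (a.coeff k : ℂ))) =
      ((∑ x ∈ S, w x * (f x * (a.eval x) ^ 2) : ℝ) : ℂ) := by
  have haev : ∀ x : ℝ, a.eval x = ∑ k : Fin m, a.coeff k * x ^ (k : ℕ) := by
    intro x
    rw [eval_eq_sum_range' ha, Finset.sum_range]
  have h1 : ∀ x, w x * (f x * (a.eval x) ^ 2) =
      ∑ k : Fin m, ∑ l : Fin m, a.coeff k * (w x * (f x * x ^ ((k : ℕ) + l)) * a.coeff l) := by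
    intro x
    rw [haev, pow_two, Finset.sum_mul_sum]
    simp only [Finset.mul_sum]
    refine Finset.sum_congr rfl fun k _ => Finset.sum_congr rfl fun l _ => ?_
    rw [pow_add]; ring
  have h2 : ∑ x ∈ S, w x * (f x * (a.eval x) ^ 2) = ∑ k : Fin m, a.coeff k *
      ∑ l : Fin m, (∑ x ∈ S, w x * (f x * x ^ ((k : ℕ) + l))) * a.coeff l := by
    simp only [h1]
    rw [Finset.sum_comm]
    refine Finset.sum_congr rfl fun k _ => ?_
    rw [Finset.sum_comm, Finset.mul_sum]
    refine Finset.sum_congr rfl fun l _ => ?_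
    rw [Finset.sum_mul, Finset.mul_sum]
  rw [h2]
  simp only [dotProduct, mulVec, of_apply, Pi.star_apply, RCLike.star_def, Complex.conj_ofReal,
    Complex.ofReal_sum, Complex.ofReal_mul]

theorem lowner_ineq (f : ℝ → ℝ) (hf : OperatorMonotone f) (S : Finset ℝ) (hS : ∀ x ∈ S, 0 ≤ x)
    (m : ℕ) (hm : S.card = 2 * m) (a : ℝ[X]) (ha : a.natDegree < m) :
    0 ≤ ∑ x ∈ S, (∏ y ∈ S.erase x, (x - y))⁻¹ * (f x * (a.eval x) ^ 2) := by
  classical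
  have hm0 : 0 < m := by omega
  obtain ⟨w, hwdef⟩ : ∃ w : ℝ → ℝ, w = fun x => (∏ y ∈ S.erase x, (x - y))⁻¹ := ⟨_, rfl⟩
  have hsum : ∀ P : ℝ[X], P.natDegree < 2 * m → ∑ x ∈ S, w x * P.eval x = P.coeff (2 * m - 1) := by
    intro P hP
    rw [hwdef]
    exact lagrange_sum S hm P hP
  have hw : ∀ x ∈ S, w x ≠ 0 := by
    intro x _
    rw [hwdef]
    refine inv_ne_zero (Finset.prod_ne_zero_iff.mpr fun y hy => ?_)
    exact sub_ne_zero.mpr (Finset.ne_of_mem_erase hy).symm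
  have hgoal : ∑ x ∈ S, (∏ y ∈ S.erase x, (x - y))⁻¹ * (f x * (a.eval x) ^ 2)
      = ∑ x ∈ S, w x * (f x * (a.eval x) ^ 2) := by rw [hwdef]
  rw [hgoal]
  clear hgoal hwdef
  have hz : ∀ P : ℝ[X], P.natDegree < 2 * m - 1 → ∑ x ∈ S, w x * P.eval x = 0 := by
    intro P hP
    rw [hsum P (by omega), coeff_eq_zero_of_natDegree_lt hP]
  have hp := card_side S hm hm0 w hw hz
  have hn := card_side S hm hm0 (fun x => - w x) (fun x hx => neg_ne_zero.mpr (hw x hx))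
    (fun P hP => by simpa using hz P hP)
  have hnot : S.filter (fun x => ¬ 0 < w x) = S.filter (fun x => 0 < - w x) := by
    refine Finset.filter_congr fun x hx => ?_
    have := hw x hx
    constructor
    · intro h
      have := lt_of_le_of_ne (not_lt.mp h) this
      linarith
    · intro h; linarith
  have hcard := Finset.card_filter_add_card_filter_not (s := S) (fun x => 0 < w x)
  rw [hnot] at hcard
  have hp' : (S.filter fun x => 0 < w x).card = m := by omega
  have hn' : (S.filter fun x => 0 < - w x).card = m := by omega
  let eβ := (Finset.equivFinOfCardEq hp').symm
  let eα := (Finset.equivFinOfCardEq hn').symm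
  let β : Fin m → ℝ := fun i => (eβ i : ℝ)
  let α : Fin m → ℝ := fun i => (eα i : ℝ)
  have hβm : ∀ i, β i ∈ S ∧ 0 < w (β i) := fun i => by
    have := (eβ i).2; exact Finset.mem_filter.mp this
  have hαm : ∀ i, α i ∈ S ∧ 0 < - w (α i) := fun i => by
    have := (eα i).2; exact Finset.mem_filter.mp this
  have hβi : Function.Injective β := fun i j h => eβ.injective (Subtype.ext h)
  have hαi : Function.Injective α := fun i j h => eα.injective (Subtype.ext h)
  have hβs : ∀ F : ℝ → ℝ, ∑ i, F (β i) = ∑ x ∈ S.filter (fun x => 0 < w x), F x := by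
    intro F
    exact (Equiv.sum_comp eβ (fun x => F x)).trans (Finset.sum_coe_sort _ F)
  have hαs : ∀ F : ℝ → ℝ, ∑ i, F (α i) = ∑ x ∈ S.filter (fun x => 0 < - w x), F x := by
    intro F
    exact (Equiv.sum_comp eα (fun x => F x)).trans (Finset.sum_coe_sort _ F)
  have hdiff : ∀ F : ℝ → ℝ, ∑ i, |w (β i)| * F (β i) - ∑ i, |w (α i)| * F (α i)
      = ∑ x ∈ S, w x * F x := by
    intro F
    rw [hβs (fun x => |w x| * F x), hαs (fun x => |w x| * F x),
      ← Finset.sum_filter_add_sum_filter_not S (fun x => 0 < w x), hnot, sub_eq_add_neg,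
      ← Finset.sum_neg_distrib]
    congr 1
    · refine Finset.sum_congr rfl fun x hx => ?_
      rw [abs_of_pos (Finset.mem_filter.mp hx).2]
    · refine Finset.sum_congr rfl fun x hx => ?_
      have := (Finset.mem_filter.mp hx).2
      rw [abs_of_neg (by linarith)]
      ring
  obtain ⟨Wα, hWα⟩ : ∃ M, M = W m w α := ⟨_, rfl⟩
  obtain ⟨Wβ, hWβ⟩ : ∃ M, M = W m w β := ⟨_, rfl⟩
  clear_value α β
  have hWu : IsUnit Wα.det := by
    rw [hWα]
    exact W_isUnit m w α hαi fun i => hw _ (hαm i).1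
  have hM : ∀ g : ℝ → ℝ, Wβ * diagonal (fun i => (g (β i) : ℂ)) * Wβᴴ -
      Wα * diagonal (fun i => (g (α i) : ℂ)) * Wαᴴ =
      of fun k l : Fin m => ((∑ x ∈ S, w x * (g x * x ^ ((k : ℕ) + l)) : ℝ) : ℂ) := by
    intro g
    rw [hWα, hWβ, W_diag, W_diag]
    ext k l
    simp only [Matrix.sub_apply, of_apply]
    rw [← Complex.ofReal_sub, hdiff (fun x => g x * x ^ ((k : ℕ) + l))]
  have hgram : Wβ * Wβᴴ = Wα * Wαᴴ := by
    have h := hM (fun _ => 1)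
    simp only [Complex.ofReal_one, diagonal_one, Matrix.mul_one, one_mul] at h
    rw [← sub_eq_zero, h]
    ext k l
    have := hz (X ^ ((k : ℕ) + l)) (by rw [natDegree_X_pow]; omega)
    simp only [eval_pow, eval_X] at this
    simp only [of_apply, this]
    simp
  have hpsd : (of fun k l : Fin m =>
      ((∑ x ∈ S, w x * (id x * x ^ ((k : ℕ) + l)) : ℝ) : ℂ)).PosSemidef := by
    have : (of fun k l : Fin m => ((∑ x ∈ S, w x * (id x * x ^ ((k : ℕ) + l)) : ℝ) : ℂ)) =
        vecMulVec (fun k : Fin m => if (k : ℕ) = m - 1 then (1 : ℂ) else 0)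
          (star (fun k : Fin m => if (k : ℕ) = m - 1 then (1 : ℂ) else 0)) := by
      ext k l
      have := hsum (X ^ ((k : ℕ) + l + 1)) (by rw [natDegree_X_pow]; omega)
      simp only [eval_pow, eval_X, coeff_X_pow] at this
      simp only [of_apply, id, ← pow_succ', this, vecMulVec_apply, Pi.star_apply]
      by_cases h1 : (k : ℕ) = m - 1
      · by_cases h2 : (l : ℕ) = m - 1
        · have : 2 * m - 1 = (k : ℕ) + l + 1 := by omega
          simp only [if_pos this, if_pos h1, if_pos h2]; simp
        · have : ¬ (2 * m - 1 = (k : ℕ) + l + 1) := by omega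
          simp only [if_neg this, if_neg h2]; simp
      · have : ¬ (2 * m - 1 = (k : ℕ) + l + 1) := by omega
        simp only [if_neg this, if_neg h1]; simp
    rw [this]
    exact posSemidef_vecMulVec_self_star _
  let U := Wα⁻¹ * Wβ
  have hWU : Wα * U = Wβ := Matrix.mul_nonsing_inv_cancel_left _ _ hWu
  have hUU : U * Uᴴ = 1 := by
    have : U * Uᴴ = Wα⁻¹ * (Wβ * Wβᴴ) * (Wα⁻¹)ᴴ := by
      simp only [U, conjTranspose_mul, Matrix.mul_assoc]
    rw [this, hgram, ← Matrix.mul_assoc, Matrix.nonsing_inv_mul _ hWu, Matrix.one_mul,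
      ← conjTranspose_mul, Matrix.nonsing_inv_mul _ hWu, conjTranspose_one]
  clear_value U
  have hUU' : Uᴴ * U = 1 := mul_eq_one_comm.mp hUU
  have hconj : ∀ g : ℝ → ℝ, Wα * (U * diagonal (fun i => (g (β i) : ℂ)) * Uᴴ -
      diagonal (fun i => (g (α i) : ℂ))) * Wαᴴ =
      of fun k l : Fin m => ((∑ x ∈ S, w x * (g x * x ^ ((k : ℕ) + l)) : ℝ) : ℂ) := by
    intro g
    rw [← hM g, Matrix.mul_sub, Matrix.sub_mul]
    congr 1
    rw [← hWU]
    simp only [conjTranspose_mul, Matrix.mul_assoc]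
  have hD : ∀ g : ℝ → ℝ, cfc g (diagonal (fun i => (α i : ℂ))) =
      diagonal (fun i => (g (α i) : ℂ)) := by
    intro g
    have := cfc_conj (1 : Matrix (Fin m) (Fin m) ℂ) (by simp) α g
    simpa using this
  have hApsd : (diagonal (fun i => (α i : ℂ))).PosSemidef := by
    refine PosSemidef.diagonal fun i => ?_
    have := hS _ (hαm i).1
    simpa using this
  have hBpsd : (U * diagonal (fun i => (β i : ℂ)) * Uᴴ).PosSemidef := by
    refine PosSemidef.mul_mul_conjTranspose_same (PosSemidef.diagonal fun i => ?_) U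
    have := hS _ (hβm i).1
    simpa using this
  have hAB : (U * diagonal (fun i => (β i : ℂ)) * Uᴴ - diagonal (fun i => (α i : ℂ))).PosSemidef := by
    have h := hconj id
    simp only [id] at h hpsd
    have h2 := PosSemidef.mul_mul_conjTranspose_same hpsd Wα⁻¹
    rw [← h] at h2
    convert h2 using 1
    set Z := U * diagonal (fun i => (β i : ℂ)) * Uᴴ - diagonal (fun i => (α i : ℂ))
    calc Z = (Wα⁻¹ * Wα) * Z * (Wα⁻¹ * Wα)ᴴ := by
          rw [Matrix.nonsing_inv_mul _ hWu]; simp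
      _ = _ := by simp only [conjTranspose_mul, Matrix.mul_assoc]
  have hfin := hf m _ _ hApsd hBpsd hAB
  rw [cfc_conj U hUU', hD] at hfin
  have hfin2 := PosSemidef.mul_mul_conjTranspose_same hfin Wα
  rw [hconj f] at hfin2
  have h3 := hfin2.dotProduct_mulVec_nonneg (fun k : Fin m => (a.coeff k : ℂ))
  rw [quad_coeff S m w f a ha] at h3
  exact_mod_cast h3

end LownerAux
namespace LownerAux

open Polynomial

/-- generators of the cone of polynomials nonnegative on the half-line -/
def gens (d : ℕ) : Set ℝ[X] :=
  {q | ∃ p : ℝ[X], 2 * p.natDegree ≤ d ∧ q = p ^ 2} ∪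
    {q | ∃ p : ℝ[X], 2 * p.natDegree + 1 ≤ d ∧ q = X * p ^ 2}

lemma gens_mul {d e : ℕ} {p q : ℝ[X]} (hp : p ∈ gens d) (hq : q ∈ gens e) :
    p * q ∈ gens (d + e) := by
  rcases hp with ⟨a, ha, rfl⟩ | ⟨a, ha, rfl⟩ <;> rcases hq with ⟨b, hb, rfl⟩ | ⟨b, hb, rfl⟩
  · have := natDegree_mul_le (p := a) (q := b)
    exact Or.inl ⟨a * b, by omega, by ring⟩
  · have := natDegree_mul_le (p := a) (q := b)
    exact Or.inr ⟨a * b, by omega, by ring⟩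
  · have := natDegree_mul_le (p := a) (q := b)
    exact Or.inr ⟨a * b, by omega, by ring⟩
  · have h1 := natDegree_mul_le (p := a) (q := b)
    have h2 := natDegree_mul_le (p := X) (q := a * b)
    rw [natDegree_X] at h2
    exact Or.inl ⟨X * (a * b), by omega, by ring⟩

lemma cone_mul {d e : ℕ} {p q : ℝ[X]} (hp : p ∈ AddSubmonoid.closure (gens d))
    (hq : q ∈ AddSubmonoid.closure (gens e)) : p * q ∈ AddSubmonoid.closure (gens (d + e)) := by
  induction hp using AddSubmonoid.closure_induction with
  | zero => rw [zero_mul]; exact zero_mem _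
  | add a b _ _ ha hb => rw [add_mul]; exact add_mem ha hb
  | mem a ha =>
    induction hq using AddSubmonoid.closure_induction with
    | zero => rw [mul_zero]; exact zero_mem _
    | add a b _ _ ha hb => rw [mul_add]; exact add_mem ha hb
    | mem b hb => exact AddSubmonoid.subset_closure (gens_mul ha hb)

lemma sq_mem {d : ℕ} (p : ℝ[X]) (h : 2 * p.natDegree ≤ d) :
    p ^ 2 ∈ AddSubmonoid.closure (gens d) :=
  AddSubmonoid.subset_closure (Or.inl ⟨p, h, rfl⟩)

lemma C_mem {d : ℕ} {c : ℝ} (hc : 0 ≤ c) : C c ∈ AddSubmonoid.closure (gens d) := by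
  have := sq_mem (d := d) (C √c) (by simp)
  rwa [← C_pow, Real.sq_sqrt hc] at this

lemma nonneg_of_nonneg_off (q : ℝ[X]) (r : ℝ) (h : ∀ x : ℝ, 0 < x → x ≠ r → 0 ≤ q.eval x) :
    ∀ x : ℝ, 0 < x → 0 ≤ q.eval x := by
  intro x hx
  by_cases hxr : x = r
  · have h1 : Filter.Tendsto (fun y => q.eval y) (nhdsWithin x (Set.Ioi x)) (nhds (q.eval x)) :=
      q.continuous.continuousAt.tendsto.mono_left nhdsWithin_le_nhds
    refine ge_of_tendsto h1 ?_
    filter_upwards [self_mem_nhdsWithin] with y hy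
    have hy : x < y := hy
    exact h y (by linarith) (by rw [← hxr]; exact hy.ne')
  · exact h x hx hxr

theorem sos : ∀ (d : ℕ) (q : ℝ[X]), q.natDegree = d → (∀ x : ℝ, 0 < x → 0 ≤ q.eval x) →
    q ∈ AddSubmonoid.closure (gens d) := by
  intro d
  induction d using Nat.strong_induction_on with
  | _ d ih =>
  intro q hd hq
  by_cases hd0 : d = 0
  · rw [eq_C_of_natDegree_eq_zero (hd.trans hd0)] at hq ⊢
    have := hq 1 one_pos
    rw [eval_C] at this
    exact C_mem this
  have hq0 : q ≠ 0 := by rintro rfl; simp at hd; omega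
  obtain ⟨z, hz⟩ := IsAlgClosed.exists_aeval_eq_zero ℂ q (by
    rw [degree_eq_natDegree hq0, hd]; exact_mod_cast hd0)
  by_cases him : z.im = 0
  · -- real root
    have hroot : q.IsRoot z.re := by
      have : z = ((z.re : ℝ) : ℂ) := Complex.ext rfl (by simp [him])
      rw [this] at hz
      have h2 : aeval (algebraMap ℝ ℂ z.re) q = 0 := hz
      rw [aeval_algebraMap_apply] at h2
      simpa using h2
    generalize z.re = r at hroot
    obtain ⟨p, rfl⟩ := dvd_iff_isRoot.mpr hroot
    have hp0 : p ≠ 0 := right_ne_zero_of_mul hq0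
    rw [natDegree_mul (X_sub_C_ne_zero r) hp0, natDegree_X_sub_C] at hd
    rcases le_or_gt r 0 with hr | hr
    · have hp := ih p.natDegree (by omega) p rfl (fun x hx => by
        have := hq x hx
        simp only [eval_mul, eval_sub, eval_X, eval_C] at this
        exact nonneg_of_mul_nonneg_right this (by linarith))
      have h1 : (X - C r : ℝ[X]) ∈ AddSubmonoid.closure (gens 1) := by
        have h2 : (X : ℝ[X]) ∈ AddSubmonoid.closure (gens 1) :=
          AddSubmonoid.subset_closure (Or.inr ⟨1, by simp, by simp⟩)
        have h3 := add_mem h2 (C_mem (d := 1) (c := -r) (by linarith))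
        rwa [C_neg, ← sub_eq_add_neg] at h3
      rw [← hd]
      exact cone_mul h1 hp
    · have hpr : p.IsRoot r := by
        have h1 : Filter.Tendsto (fun y => p.eval y) (nhdsWithin r (Set.Ioi r)) (nhds (p.eval r)) :=
          p.continuous.continuousAt.tendsto.mono_left nhdsWithin_le_nhds
        have h2 : Filter.Tendsto (fun y => p.eval y) (nhdsWithin r (Set.Iio r)) (nhds (p.eval r)) :=
          p.continuous.continuousAt.tendsto.mono_left nhdsWithin_le_nhds
        refine le_antisymm (le_of_tendsto h2 ?_) (ge_of_tendsto h1 ?_)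
        · have h0 : ∀ᶠ y in nhdsWithin r (Set.Iio r), 0 < y :=
            nhdsWithin_le_nhds (lt_mem_nhds hr)
          filter_upwards [self_mem_nhdsWithin, h0] with y hy hy0
          have hy : y < r := hy
          have := hq y hy0
          simp only [eval_mul, eval_sub, eval_X, eval_C] at this
          by_contra hcon
          push Not at hcon
          nlinarith
        · filter_upwards [self_mem_nhdsWithin] with y hy
          have hy : r < y := hy
          have := hq y (by linarith)
          simp only [eval_mul, eval_sub, eval_X, eval_C] at this
          exact nonneg_of_mul_nonneg_right this (by linarith)
      obtain ⟨s, rfl⟩ := dvd_iff_isRoot.mpr hpr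
      have hs0 : s ≠ 0 := right_ne_zero_of_mul hp0
      rw [natDegree_mul (X_sub_C_ne_zero r) hs0, natDegree_X_sub_C] at hd
      have hs := ih s.natDegree (by omega) s rfl (nonneg_of_nonneg_off s r fun x hx hxr => by
        have := hq x hx
        simp only [eval_mul, eval_sub, eval_X, eval_C] at this
        rw [← mul_assoc] at this
        exact nonneg_of_mul_nonneg_right this (mul_self_pos.mpr (sub_ne_zero.mpr hxr)))
      have h1 := cone_mul (sq_mem (d := 2) (X - C r) (by rw [natDegree_X_sub_C])) hs
      have e1 : (X - C r) * ((X - C r) * s) = (X - C r) ^ 2 * s := by ring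
      have e2 : 1 + (1 + s.natDegree) = 2 + s.natDegree := by omega
      rw [← hd, e1, e2]
      exact h1
  · -- nonreal root
    have hdvd := Polynomial.quadratic_dvd_of_aeval_eq_zero_im_ne_zero q hz him
    obtain ⟨p, hp⟩ := hdvd
    set k : ℝ[X] := X ^ 2 - C (2 * z.re) * X + C (‖z‖ ^ 2) with hk
    have hke : k = (X - C z.re) ^ 2 + C (z.im ^ 2) := by
      rw [hk, ← Complex.normSq_eq_norm_sq, Complex.normSq_apply]
      simp only [map_add, map_mul, map_pow]
      have : (C 2 : ℝ[X]) = 2 := rfl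
      rw [this]
      ring
    have hkdeg : k.natDegree = 2 := by
      rw [hk]; compute_degree!
    have hk0 : k ≠ 0 := by rintro h; rw [h] at hkdeg; simp at hkdeg
    rw [hp] at hq hd hq0 ⊢
    have hp0 : p ≠ 0 := right_ne_zero_of_mul hq0
    rw [natDegree_mul hk0 hp0, hkdeg] at hd
    have hpm := ih p.natDegree (by omega) p rfl (fun x hx => by
      have := hq x hx
      rw [eval_mul] at this
      refine nonneg_of_mul_nonneg_right this ?_
      rw [hke]
      simp only [eval_add, eval_pow, eval_sub, eval_X, eval_C]
      positivity)
    have h1 : k ∈ AddSubmonoid.closure (gens 2) := by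
      rw [hke]
      exact add_mem (sq_mem _ (by rw [natDegree_X_sub_C])) (C_mem (sq_nonneg _))
    rw [← hd]
    exact cone_mul h1 hpm

lemma gens_mono {d e : ℕ} (h : d ≤ e) : gens d ⊆ gens e := by
  rintro q (⟨p, hp, rfl⟩ | ⟨p, hp, rfl⟩)
  · exact Or.inl ⟨p, hp.trans h, rfl⟩
  · exact Or.inr ⟨p, hp.trans h, rfl⟩

theorem positivity_odd (f : ℝ → ℝ) (hnn : ∀ x : ℝ, 0 ≤ x → 0 ≤ f x) (hf : OperatorMonotone f)
    (T : Finset ℝ) (hT : ∀ x ∈ T, 0 < x) (m : ℕ) (hm : T.card + 1 = 2 * m) (c : ℝ → ℝ)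
    (hc : ∀ l : ℝ, 0 < l → 0 ≤ ∑ x ∈ T, c x * (x * (l + 1) / (x + l))) :
    0 ≤ ∑ x ∈ T, c x * f x := by
  classical
  have hm0 : 0 < m := by omega
  let D : ℝ → ℝ := fun x => (∏ y ∈ T.erase x, (x - y))⁻¹
  have hDne : ∀ x ∈ T, ∏ y ∈ T.erase x, (x - y) ≠ 0 := fun x _ =>
    Finset.prod_ne_zero_iff.mpr fun y hy => sub_ne_zero.mpr (Finset.ne_of_mem_erase hy).symm
  have hsgn : ∀ x ∈ T, ∏ y ∈ T.erase x, (-x + y) = ∏ y ∈ T.erase x, (x - y) := by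
    intro x hx
    have : ∀ y ∈ T.erase x, (-x + y) = -(x - y) := fun y _ => by ring
    rw [Finset.prod_congr rfl this, Finset.prod_neg, Finset.card_erase_of_mem hx]
    have : Even (T.card - 1) := ⟨m - 1, by omega⟩
    rw [this.neg_one_pow, one_mul]
  let q : ℝ[X] := ∑ x ∈ T, C (c x * x) * ∏ y ∈ T.erase x, (X + C y)
  have hqdeg : q.natDegree ≤ 2 * m - 2 := by
    refine natDegree_sum_le_of_forall_le _ _ fun x hx => ?_
    refine (natDegree_C_mul_le _ _).trans ?_
    rw [natDegree_prod_of_monic _ _ fun y _ => monic_X_add_C y]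
    simp only [natDegree_X_add_C, Finset.sum_const, smul_eq_mul, mul_one,
      Finset.card_erase_of_mem hx]
    omega
  have hqpos : ∀ l : ℝ, 0 < l → 0 ≤ q.eval l := by
    intro l hl
    have h1 : q.eval l = (∏ y ∈ T, (l + y)) / (l + 1) *
        ∑ x ∈ T, c x * (x * (l + 1) / (x + l)) := by
      simp only [q, eval_finsetSum, eval_mul, eval_C, eval_prod, eval_add, eval_X, Finset.mul_sum]
      refine Finset.sum_congr rfl fun x hx => ?_
      rw [← Finset.mul_prod_erase T _ hx]
      have h1 : l + 1 ≠ 0 := by positivity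
      have h2 : x + l ≠ 0 := by have := hT x hx; positivity
      have h3 : l + x ≠ 0 := by have := hT x hx; positivity
      field_simp
      ring
    rw [h1]
    refine mul_nonneg (div_nonneg (Finset.prod_nonneg fun y hy => ?_) (by positivity)) (hc l hl)
    have := hT y hy
    positivity
  have hqev : ∀ x ∈ T, q.eval (-x) = c x * x * ∏ y ∈ T.erase x, (x - y) := by
    intro x hx
    simp only [q, eval_finsetSum, eval_mul, eval_C, eval_prod, eval_add, eval_X]
    rw [Finset.sum_eq_single x, hsgn x hx]
    · intro z hz hzx
      rw [Finset.prod_eq_zero (i := x), mul_zero]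
      · exact Finset.mem_erase.mpr ⟨hzx.symm, hx⟩
      · ring
    · exact fun h => absurd hx h
  have hmem : q ∈ AddSubmonoid.closure (gens (2 * m - 2)) :=
    AddSubmonoid.closure_mono (gens_mono hqdeg) (sos _ q rfl hqpos)
  have hΛ : ∀ p ∈ AddSubmonoid.closure (gens (2 * m - 2)),
      0 ≤ ∑ x ∈ T, p.eval (-x) * (x⁻¹ * D x * f x) := by
    intro p hp
    induction hp using AddSubmonoid.closure_induction with
    | zero => simp
    | add a b _ _ ha hb =>
      simp only [eval_add, add_mul, Finset.sum_add_distrib]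
      exact add_nonneg ha hb
    | mem p hp =>
      rcases hp with ⟨a, ha, rfl⟩ | ⟨b, hb, rfl⟩
      · have h0 : (0 : ℝ) ∉ T := fun h => (hT 0 h).false
        have hL := lowner_ineq f hf (insert 0 T) (fun x hx => by
          rcases Finset.mem_insert.mp hx with rfl | h
          · exact le_rfl
          · exact (hT x h).le) m (by rw [Finset.card_insert_of_notMem h0, hm]) (a.comp (-X)) (by
            have := natDegree_comp_le (p := a) (q := -X)
            rw [natDegree_neg, natDegree_X] at this
            omega)
        rw [Finset.sum_insert h0, Finset.erase_insert h0] at hL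
        have h1 : ∏ y ∈ T, ((0 : ℝ) - y) ≤ 0 := by
          have : ∀ y ∈ T, (0 : ℝ) - y = - y := fun y _ => by ring
          rw [Finset.prod_congr rfl this, Finset.prod_neg]
          have : Odd T.card := ⟨m - 1, by omega⟩
          rw [this.neg_one_pow]
          have : 0 ≤ ∏ y ∈ T, y := Finset.prod_nonneg fun y hy => (hT y hy).le
          linarith
        have h2 : (∏ y ∈ T, ((0 : ℝ) - y))⁻¹ * (f 0 * ((a.comp (-X)).eval 0) ^ 2) ≤ 0 :=
          mul_nonpos_of_nonpos_of_nonneg (inv_nonpos.mpr h1)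
            (mul_nonneg (hnn 0 le_rfl) (sq_nonneg _))
        refine (by linarith : (0 : ℝ) ≤ _).trans_eq (Finset.sum_congr rfl fun x hx => ?_)
        have hx0 : (0 : ℝ) ≠ x := (hT x hx).ne
        rw [Finset.erase_insert_of_ne hx0, Finset.prod_insert (by
          intro h; exact h0 (Finset.mem_of_mem_erase h))]
        simp only [eval_comp, eval_neg, eval_X, eval_pow, sub_zero, mul_inv, D]
        ring
      · -- X * b ^ 2
        have hb' : ∀ x ∈ T, (X * b ^ 2).eval (-x) * (x⁻¹ * D x * f x) =
            - (D x * f x * b.eval (-x) ^ 2) := by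
          intro x hx
          have := (hT x hx).ne'
          simp only [eval_mul, eval_X, eval_pow]
          field_simp
        rw [Finset.sum_congr rfl hb', Finset.sum_neg_distrib, Left.nonneg_neg_iff]
        by_contra hcon
        push Not at hcon
        set β := ∑ x ∈ T, D x * f x * b.eval (-x) ^ 2 with hβ
        set α := ∑ x ∈ T, D x * f x * b.eval (-x) ^ 2 * x with hα
        let Y : ℝ := (∑ x ∈ T, x) + |α| / β + 1
        have hYT : ∀ x ∈ T, x < Y := by
          intro x hx
          have h1 := Finset.single_le_sum (f := fun x => x) (fun y hy => (hT y hy).le) hx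
          have h2 : 0 ≤ |α| / β := by positivity
          linarith
        have hY0 : 0 ≤ Y := by
          have h1 := Finset.sum_nonneg (f := fun x => x) (fun y hy => (hT y hy).le)
          have h2 : 0 ≤ |α| / β := by positivity
          linarith
        have hYα : α < Y * β := by
          have h1 := Finset.sum_nonneg (f := fun x => x) (fun y hy => (hT y hy).le)
          have h2 : |α| / β + 1 ≤ Y := by linarith
          have h3 : (|α| / β + 1) * β ≤ Y * β := mul_le_mul_of_nonneg_right h2 hcon.le
          have h4 : (|α| / β + 1) * β = |α| + β := by field_simp
          have := le_abs_self α
          linarith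
        have hYn : Y ∉ T := fun h => (hYT Y h).false
        have hL := lowner_ineq f hf (insert Y T) (fun x hx => by
          rcases Finset.mem_insert.mp hx with rfl | h
          · exact hY0
          · exact (hT x h).le) m (by rw [Finset.card_insert_of_notMem hYn, hm])
          (b.comp (-X) * (X - C Y)) (by
            have h1 := natDegree_comp_le (p := b) (q := -X)
            rw [natDegree_neg, natDegree_X] at h1
            have h2 := natDegree_mul_le (p := b.comp (-X)) (q := X - C Y)
            rw [natDegree_X_sub_C] at h2
            omega)
        rw [Finset.sum_insert hYn] at hL
        have hz : (b.comp (-X) * (X - C Y)).eval Y = 0 := by simp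
        rw [hz] at hL
        have h5 : ∀ x ∈ T, (∏ y ∈ (insert Y T).erase x, (x - y))⁻¹ *
            (f x * ((b.comp (-X) * (X - C Y)).eval x) ^ 2) =
            D x * f x * b.eval (-x) ^ 2 * x - Y * (D x * f x * b.eval (-x) ^ 2) := by
          intro x hx
          have hxY : Y ≠ x := (hYT x hx).ne'
          rw [Finset.erase_insert_of_ne hxY, Finset.prod_insert (by
            intro h; exact hYn (Finset.mem_of_mem_erase h))]
          have : x - Y ≠ 0 := sub_ne_zero.mpr hxY.symm
          simp only [eval_comp, eval_neg, eval_X, eval_mul, eval_sub, eval_C, mul_inv, D]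
          field_simp
        rw [Finset.sum_congr rfl h5, Finset.sum_sub_distrib, ← Finset.mul_sum, ← hα, ← hβ] at hL
        norm_num at hL
        linarith
  refine (hΛ q hmem).trans_eq (Finset.sum_congr rfl fun x hx => ?_)
  rw [hqev x hx]
  have h1 := (hT x hx).ne'
  have h2 := hDne x hx
  simp only [D]
  field_simp

theorem positivity_all (f : ℝ → ℝ) (hnn : ∀ x : ℝ, 0 ≤ x → 0 ≤ f x) (hf : OperatorMonotone f)
    (T : Finset ℝ) (hT : ∀ x ∈ T, 0 < x) (c : ℝ → ℝ)
    (hc : ∀ l : ℝ, 0 < l → 0 ≤ ∑ x ∈ T, c x * (x * (l + 1) / (x + l))) :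
    0 ≤ ∑ x ∈ T, c x * f x := by
  classical
  rcases Nat.even_or_odd T.card with ⟨k, hk⟩ | ⟨k, hk⟩
  · obtain ⟨z, hz⟩ := Set.Infinite.exists_notMem_finset (Set.Ioi_infinite (0 : ℝ)) T
    obtain ⟨hz0, hzT⟩ := hz
    have hsum : ∀ g : ℝ → ℝ, ∑ x ∈ insert z T, (if x = z then 0 else c x) * g x =
        ∑ x ∈ T, c x * g x := by
      intro g
      rw [Finset.sum_insert hzT]
      simp only [if_true, zero_mul, zero_add]
      refine Finset.sum_congr rfl fun x hx => ?_
      rw [if_neg]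
      rintro rfl
      exact hzT hx
    have := positivity_odd f hnn hf (insert z T) (fun x hx => by
      rcases Finset.mem_insert.mp hx with rfl | h
      · exact hz0
      · exact hT x h) (k + 1) (by rw [Finset.card_insert_of_notMem hzT]; omega)
      (fun x => if x = z then 0 else c x) (fun l hl => by
        rw [hsum (fun x => x * (l + 1) / (x + l))]; exact hc l hl)
    rwa [hsum f] at this
  · exact positivity_odd f hnn hf T hT (k + 1) (by omega) c hc

end LownerAux
namespace LownerAux

open Filter Topology

open scoped CompactlySupported

lemma phi_continuous {x : ℝ} (hx : 0 < x) : Continuous (phi x) := by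
  rw [continuous_iff_continuousAt]
  intro l
  by_cases hl : l = ⊤
  · subst hl
    have h1 : ContinuousAt (fun l : ℝ≥0∞ => x * (1 + (l⁻¹).toReal) / (x * (l⁻¹).toReal + 1)) ⊤ := by
      have h2 : ContinuousAt (fun l : ℝ≥0∞ => (l⁻¹).toReal) ⊤ := by
        refine ContinuousAt.comp (f := fun l : ℝ≥0∞ => l⁻¹) (g := ENNReal.toReal) ?_
          continuous_inv.continuousAt
        exact ENNReal.continuousAt_toReal (by simp)
      refine ContinuousAt.div (by fun_prop) (by fun_prop) ?_
      simp
    refine h1.congr ?_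
    have : ∀ᶠ l : ℝ≥0∞ in 𝓝 ⊤, 0 < l := lt_mem_nhds (by simp)
    filter_upwards [this] with l hl
    by_cases ht : l = ⊤
    · simp [phi, ht]
    · have h3 : 0 < l.toReal := ENNReal.toReal_pos hl.ne' ht
      simp only [phi, hl.ne', ht, if_false, ENNReal.toReal_inv]
      field_simp
  · have h1 : ContinuousAt (fun l : ℝ≥0∞ => x * (l.toReal + 1) / (x + l.toReal)) l := by
      have h2 : ContinuousAt ENNReal.toReal l := ENNReal.continuousAt_toReal hl
      refine ContinuousAt.div (by fun_prop) (by fun_prop) ?_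
      positivity
    refine h1.congr ?_
    have : ∀ᶠ l' : ℝ≥0∞ in 𝓝 l, l' < ⊤ := gt_mem_nhds (lt_top_iff_ne_top.mpr hl)
    filter_upwards [this] with l' hl'
    by_cases h0 : l' = 0
    · simp [phi, h0, hx.ne']
    · simp [phi, h0, hl'.ne]

/-- `phi x` as a compactly supported continuous function. -/
noncomputable def Phi (x : Set.Ioi (0 : ℝ)) : C_c(ℝ≥0∞, ℝ) where
  toFun := phi x
  continuous_toFun := phi_continuous x.2
  hasCompactSupport' := HasCompactSupport.of_compactSpace _

/-- cone of nonnegative functions -/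
def nnCone : PointedCone ℝ C_c(ℝ≥0∞, ℝ) where
  carrier := {h | ∀ l, 0 ≤ h l}
  add_mem' := fun ha hb l => add_nonneg (ha l) (hb l)
  zero_mem' := fun _ => le_rfl
  smul_mem' := fun c _ hh l => mul_nonneg c.2 (hh l)

lemma phi_one (l : ℝ≥0∞) : phi 1 l = 1 := by
  unfold phi
  split_ifs
  · rfl
  · rfl
  · have : 0 ≤ l.toReal := ENNReal.toReal_nonneg
    rw [one_mul, add_comm, div_self (by positivity)]

theorem functional_pos (f : ℝ → ℝ) (hnn : ∀ x : ℝ, 0 ≤ x → 0 ≤ f x) (hf : OperatorMonotone f)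
    (c : Set.Ioi (0 : ℝ) →₀ ℝ) (hc : ∀ l, 0 ≤ (Finsupp.linearCombination ℝ Phi c) l) :
    0 ≤ Finsupp.linearCombination ℝ (fun x : Set.Ioi (0 : ℝ) => f x) c := by
  classical
  have hsum : ∀ g : ℝ → ℝ, ∑ x ∈ c.support.map (Function.Embedding.subtype _),
      (if h : 0 < x then c ⟨x, h⟩ else 0) * g x = ∑ x ∈ c.support, c x * g x := by
    intro g
    rw [Finset.sum_map]
    refine Finset.sum_congr rfl fun x _ => ?_
    have : 0 < (x : ℝ) := x.2
    simp [this]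
  have h := positivity_all f hnn hf (c.support.map (Function.Embedding.subtype _))
    (fun x hx => by
      obtain ⟨y, _, rfl⟩ := Finset.mem_map.mp hx
      exact y.2)
    (fun x => if h : 0 < x then c ⟨x, h⟩ else 0)
    (fun l hl => by
      rw [hsum (fun x => x * (l + 1) / (x + l))]
      have := hc (ENNReal.ofReal l)
      rw [Finsupp.linearCombination_apply, Finsupp.sum,
        CompactlySupportedContinuousMap.sum_apply] at this
      refine this.trans_eq (Finset.sum_congr rfl fun x _ => ?_)
      rw [CompactlySupportedContinuousMap.smul_apply, smul_eq_mul]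
      congr 1
      change phi x (ENNReal.ofReal l) = _
      have h0 : ENNReal.ofReal l ≠ 0 := by simpa using hl
      simp [phi, hl, ENNReal.toReal_ofReal hl.le])
  rw [hsum f] at h
  rw [Finsupp.linearCombination_apply, Finsupp.sum]
  simpa using h

theorem exists_measure_pos (f : ℝ → ℝ) (hnn : ∀ x : ℝ, 0 ≤ x → 0 ≤ f x)
    (hf : OperatorMonotone f) :
    ∃ ν : Measure ℝ≥0∞, IsFiniteMeasure ν ∧ ∀ x : ℝ, 0 < x → f x = ∫ l, phi x l ∂ν := by
  let T := Finsupp.linearCombination ℝ Phi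
  let F := Finsupp.linearCombination ℝ (fun x : Set.Ioi (0 : ℝ) => f x)
  have hpos : ∀ c, (∀ l, 0 ≤ (T c) l) → 0 ≤ F c := functional_pos f hnn hf
  have hker : ∀ c d, T c = T d → F c = F d := by
    intro c d hcd
    have h1 := hpos (c - d) (fun l => by rw [map_sub, hcd, sub_self]; exact le_rfl)
    have h2 := hpos (d - c) (fun l => by rw [map_sub, hcd, sub_self]; exact le_rfl)
    rw [map_sub] at h1 h2
    linarith
  have hex : ∀ y : LinearMap.range T, ∃ c, T c = y := fun y => y.2
  choose s hTs using hex
  let P : C_c(ℝ≥0∞, ℝ) →ₗ.[ℝ] ℝ := ⟨LinearMap.range T,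
    { toFun := fun y => F (s y)
      map_add' := fun y z => by
        rw [← map_add]
        exact hker _ _ (by rw [map_add, hTs, hTs, hTs]; rfl)
      map_smul' := fun r y => by
        rw [RingHom.id_apply, ← map_smul]
        exact hker _ _ (by rw [map_smul, hTs, hTs]; rfl) }⟩
  have hTsingle : ∀ x : Set.Ioi (0 : ℝ), ∀ r : ℝ, T (Finsupp.single x r) = r • Phi x := by
    intro x r
    simp [T, Finsupp.linearCombination_single]
  obtain ⟨g, hg, hgpos⟩ := riesz_extension nnCone P
    (fun y hy => by
      refine hpos (s y) fun l => ?_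
      rw [hTs y]
      exact hy l)
    (fun y => by
      obtain ⟨M, hM⟩ : ∃ M : ℝ, ∀ l, -M ≤ y l := by
        obtain ⟨M, hM⟩ := (isCompact_range y.continuous).bddBelow
        exact ⟨-M, fun l => by rw [neg_neg]; exact hM ⟨l, rfl⟩⟩
      refine ⟨⟨M • Phi ⟨1, Set.mem_Ioi.mpr one_pos⟩, ⟨_, hTsingle _ M⟩⟩, fun l => ?_⟩
      change 0 ≤ M * phi 1 l + y l
      rw [phi_one]
      have := hM l
      linarith)
  let Λ : C_c(ℝ≥0∞, ℝ) →ₚ[ℝ] ℝ := PositiveLinearMap.mk₀ g (fun h hh => hgpos h (fun l => hh l))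
  refine ⟨RealRMK.rieszMeasure Λ, inferInstance, fun x hx => ?_⟩
  have h1 := RealRMK.integral_rieszMeasure Λ (Phi ⟨x, hx⟩)
  have h2 : Λ (Phi ⟨x, hx⟩) = f x := by
    have h3 : T (Finsupp.single ⟨x, hx⟩ 1) = Phi ⟨x, hx⟩ := by rw [hTsingle, one_smul]
    have h4 := hg ⟨Phi ⟨x, hx⟩, ⟨_, h3⟩⟩
    change g _ = _
    refine h4.trans ?_
    change F (s _) = _
    rw [hker (s _) (Finsupp.single ⟨x, hx⟩ 1) (by rw [hTs, h3])]
    simp [F, Finsupp.linearCombination_single]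
  rw [← h2, ← h1]
  rfl

theorem extend_zero (f : ℝ → ℝ) (hc : ContinuousOn f (Set.Ici 0)) (ν : Measure ℝ≥0∞)
    [IsFiniteMeasure ν] (h : ∀ x : ℝ, 0 < x → f x = ∫ l, phi x l ∂ν) :
    f 0 = ∫ l, phi 0 l ∂ν := by
  let u : ℕ → ℝ := fun n => 1 / ((n : ℝ) + 1)
  have hu0 : Tendsto u atTop (𝓝 0) := tendsto_one_div_add_atTop_nhds_zero_nat
  have hup : ∀ n, 0 < u n := fun n => by positivity
  have hu1 : ∀ n, u n ≤ 1 := fun n => by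
    simp only [u]
    rw [div_le_one (by positivity)]
    have : (0 : ℝ) ≤ n := by positivity
    linarith
  have h1 : Tendsto (fun n => f (u n)) atTop (𝓝 (f 0)) := by
    refine (hc 0 Set.self_mem_Ici).tendsto.comp ?_
    exact tendsto_nhdsWithin_iff.mpr ⟨hu0, Eventually.of_forall fun n => (hup n).le⟩
  have h2 : Tendsto (fun n => ∫ l, phi (u n) l ∂ν) atTop (𝓝 (∫ l, phi 0 l ∂ν)) := by
    refine tendsto_integral_of_dominated_convergence (fun _ => 2)
      (fun n => (phi_measurable _).aestronglyMeasurable) (integrable_const _) (fun n => ?_) ?_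
    · refine Eventually.of_forall fun l => ?_
      rw [Real.norm_of_nonneg (phi_nonneg (hup n).le l)]
      have := phi_le (hup n).le l
      have := hu1 n
      linarith
    · refine Eventually.of_forall fun l => ?_
      by_cases h0 : l = 0
      · simp [phi, h0]
      by_cases ht : l = ⊤
      · simpa [phi, ht] using hu0
      have hl : 0 < l.toReal := ENNReal.toReal_pos h0 ht
      simp only [phi, h0, ht, if_false]
      have : ContinuousAt (fun x : ℝ => x * (l.toReal + 1) / (x + l.toReal)) 0 := by
        refine ContinuousAt.div (by fun_prop) (by fun_prop) ?_
        simpa using hl.ne'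
      exact this.tendsto.comp hu0
  have h3 : (fun n => f (u n)) = fun n => ∫ l, phi (u n) l ∂ν := funext fun n => h _ (hup n)
  rw [h3] at h1
  exact tendsto_nhds_unique h1 h2

end LownerAux

theorem stmt4 (f : ℝ → ℝ) (hc : ContinuousOn f (Set.Ici 0))
    (hnn : ∀ x : ℝ, 0 ≤ x → 0 ≤ f x) :
    OperatorMonotone f ↔
      ∃ ν : Measure ℝ≥0∞, IsFiniteMeasure ν ∧ ∀ x : ℝ, 0 ≤ x → f x = ∫ l, phi x l ∂ν := by
  constructor
  · intro hf
    obtain ⟨ν, hν, h⟩ := LownerAux.exists_measure_pos f hnn hf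
    refine ⟨ν, hν, fun x hx => ?_⟩
    rcases hx.eq_or_lt with rfl | hx
    · exact LownerAux.extend_zero f hc ν h
    · exact h x hx
  · rintro ⟨ν, hν, h⟩
    exact LownerAux.om_of_measure f ν h
end

section
/- Let f : [0,∞) → [0,∞) be a continuous operator monotone function. Then there exists a continuous operator monotone function g : [0,∞) → [0,∞) such that g(x) = x·f(1/x) for all x ∈ (0,∞). -/
open MeasureTheory Real ComplexOrder

open Matrix in
lemma aux_cont {ι : Type*} [Fintype ι] [DecidableEq ι] (A : Matrix ι ι ℂ) (hA : A.IsHermitian)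
    (f : ℝ → ℝ) : ContinuousOn f (spectrum ℝ A) := by
  have : (spectrum ℝ A).Finite := by
    rw [hA.spectrum_real_eq_range_eigenvalues]; exact Set.finite_range _
  exact this.continuousOn f

lemma aux_poly {ι κ : Type*} [Fintype ι] [DecidableEq ι] [Fintype κ] [DecidableEq κ]
    (A : Matrix ι ι ℂ) (B : Matrix κ κ ℂ) (hA : A.IsHermitian) (hB : B.IsHermitian)
    (f : ℝ → ℝ) : ∃ p : Polynomial ℝ, cfc f A = Polynomial.aeval A p ∧
      cfc f B = Polynomial.aeval B p := by
  have h1 : (spectrum ℝ A).Finite := by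
    rw [hA.spectrum_real_eq_range_eigenvalues]; exact Set.finite_range _
  have h2 : (spectrum ℝ B).Finite := by
    rw [hB.spectrum_real_eq_range_eigenvalues]; exact Set.finite_range _
  classical
  let s : Finset ℝ := (h1.union h2).toFinset
  refine ⟨Lagrange.interpolate s id f, ?_, ?_⟩
  · rw [← cfc_polynomial _ A hA.isSelfAdjoint]
    apply cfc_congr
    intro x hx
    have hx' : x ∈ s := by simp [s, hx]
    exact (Lagrange.eval_interpolate_at_node (v := id) f Function.injective_id.injOn hx').symm
  · rw [← cfc_polynomial _ B hB.isSelfAdjoint]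
    apply cfc_congr
    intro x hx
    have hx' : x ∈ s := by simp [s, hx]
    exact (Lagrange.eval_interpolate_at_node (v := id) f Function.injective_id.injOn hx').symm

lemma aux_intertwine_poly {ι κ : Type*} [Fintype ι] [DecidableEq ι] [Fintype κ] [DecidableEq κ]
    (A : Matrix ι ι ℂ) (B : Matrix κ κ ℂ) (W : Matrix ι κ ℂ) (h : A * W = W * B)
    (p : Polynomial ℝ) : Polynomial.aeval A p * W = W * Polynomial.aeval B p := by
  induction p using Polynomial.induction_on' with
  | add p q hp hq => simp [Matrix.add_mul, Matrix.mul_add, hp, hq]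
  | monomial n a =>
    have : A ^ n * W = W * B ^ n := by
      induction n with
      | zero => simp
      | succ n ih => rw [pow_succ, Matrix.mul_assoc, h, ← Matrix.mul_assoc, ih, Matrix.mul_assoc,
          ← pow_succ]
    simp [Polynomial.aeval_monomial, Algebra.algebraMap_eq_smul_one, this]

lemma aux_intertwine {ι κ : Type*} [Fintype ι] [DecidableEq ι] [Fintype κ] [DecidableEq κ]
    (A : Matrix ι ι ℂ) (B : Matrix κ κ ℂ) (hA : A.IsHermitian) (hB : B.IsHermitian)
    (W : Matrix ι κ ℂ) (h : A * W = W * B)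
    (f : ℝ → ℝ) : cfc f A * W = W * cfc f B := by
  obtain ⟨p, h1, h2⟩ := aux_poly A B hA hB f
  rw [h1, h2, aux_intertwine_poly A B W h]

lemma aux_reindex {ι κ : Type*} [Fintype ι] [DecidableEq ι] [Fintype κ] [DecidableEq κ]
    (e : ι ≃ κ) (A : Matrix κ κ ℂ) (hA : A.IsHermitian) (f : ℝ → ℝ) :
    cfc f (A.submatrix e e) = (cfc f A).submatrix e e := by
  obtain ⟨p, h1, h2⟩ := aux_poly A (A.submatrix e e) hA (hA.submatrix e) f
  rw [h1, h2]
  have := Polynomial.aeval_algHom_apply (Matrix.reindexAlgEquiv ℝ ℂ e.symm).toAlgHom A p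
  simpa using this

lemma aux_mono {ι : Type*} [Fintype ι] [DecidableEq ι] {f : ℝ → ℝ} (hm : OperatorMonotone f)
    (A B : Matrix ι ι ℂ) (hA : A.PosSemidef) (hB : B.PosSemidef) (h : (B - A).PosSemidef) :
    (cfc f B - cfc f A).PosSemidef := by
  let e := (Fintype.equivFin ι).symm
  have := hm (Fintype.card ι) (A.submatrix e e) (B.submatrix e e) (hA.submatrix e)
    (hB.submatrix e) (h.submatrix e)
  rw [aux_reindex e A hA.1, aux_reindex e B hB.1] at this
  exact (Matrix.posSemidef_submatrix_equiv e).1 this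

lemma aux_cfc_psd {ι : Type*} [Fintype ι] [DecidableEq ι] (A : Matrix ι ι ℂ)
    (hA : A.IsHermitian) (f : ℝ → ℝ) (h : ∀ x ∈ spectrum ℝ A, 0 ≤ f x) :
    (cfc f A).PosSemidef := by
  rw [hA.cfc_eq, Matrix.IsHermitian.cfc, Unitary.conjStarAlgAut_apply]
  apply Matrix.PosSemidef.mul_mul_conjTranspose_same
  apply Matrix.PosSemidef.diagonal
  intro i
  simpa using h _ (hA.eigenvalues_mem_spectrum_real i)

lemma aux_herm {ι : Type*} [Fintype ι] [DecidableEq ι] (A : Matrix ι ι ℂ) (f : ℝ → ℝ) :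
    (cfc f A).IsHermitian := (cfc_predicate f A : IsSelfAdjoint _)

lemma aux_spec {ι : Type*} [Fintype ι] [DecidableEq ι] (A : Matrix ι ι ℂ)
    (hA : A.PosSemidef) (x : ℝ) (hx : x ∈ spectrum ℝ A) : 0 ≤ x := by
  rw [hA.1.spectrum_real_eq_range_eigenvalues] at hx
  obtain ⟨i, rfl⟩ := hx
  exact hA.eigenvalues_nonneg i

lemma aux_spec_pos {ι : Type*} [Fintype ι] [DecidableEq ι] (A : Matrix ι ι ℂ)
    (hA : A.PosDef) (x : ℝ) (hx : x ∈ spectrum ℝ A) : 0 < x := by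
  rw [hA.1.spectrum_real_eq_range_eigenvalues] at hx
  obtain ⟨i, rfl⟩ := hx
  exact hA.eigenvalues_pos i

lemma aux_tendsto {ι : Type*} [Fintype ι] [DecidableEq ι] (A : Matrix ι ι ℂ)
    (hA : A.IsHermitian) {l : Filter ℝ} (F : ℝ → ℝ → ℝ) (f : ℝ → ℝ)
    (h : ∀ x ∈ spectrum ℝ A, Filter.Tendsto (fun t => F t x) l (nhds (f x))) :
    Filter.Tendsto (fun t => cfc (F t) A) l (nhds (cfc f A)) := by
  simp only [hA.cfc_eq, Matrix.IsHermitian.cfc, Unitary.conjStarAlgAut_apply]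
  refine Filter.Tendsto.mul (Filter.Tendsto.mul tendsto_const_nhds ?_) tendsto_const_nhds
  have hc : Continuous (fun d : ι → ℂ => Matrix.diagonal d) := by fun_prop
  refine (hc.tendsto _).comp ?_
  rw [tendsto_pi_nhds]
  intro i
  exact (Complex.continuous_ofReal.tendsto _).comp (h _ (hA.eigenvalues_mem_spectrum_real i))

lemma aux_closed {ι : Type*} [Fintype ι] [DecidableEq ι] {l : Filter ℝ} [l.NeBot]
    (M : ℝ → Matrix ι ι ℂ) (M0 : Matrix ι ι ℂ) (h : Filter.Tendsto M l (nhds M0))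
    (hp : ∀ᶠ t in l, (M t).PosSemidef) : M0.PosSemidef := by
  have hcl : IsClosed {M : Matrix ι ι ℂ | M.PosSemidef} := by
    simp only [Matrix.posSemidef_iff_dotProduct_mulVec, Set.ofPred_and, Set.ofPred_forall]
    refine IsClosed.inter ?_ (isClosed_iInter fun x => ?_)
    · exact isClosed_eq (by fun_prop) (by fun_prop)
    · exact isClosed_le (by fun_prop) (by fun_prop)
  exact hcl.mem_of_tendsto h hp

lemma aux_bdd {ι : Type*} [Fintype ι] [DecidableEq ι] (A : Matrix ι ι ℂ)
    (hA : A.IsHermitian) : ∃ c : ℝ, 0 ≤ c ∧ (c • (1 : Matrix ι ι ℂ) - A).PosSemidef := by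
  have h1 : (spectrum ℝ A).Finite := by
    rw [hA.spectrum_real_eq_range_eigenvalues]; exact Set.finite_range _
  obtain ⟨c, hc⟩ := h1.bddAbove
  refine ⟨max c 0, le_max_right _ _, ?_⟩
  have : max c 0 • (1 : Matrix ι ι ℂ) - A = cfc (fun x => max c 0 - x) A := by
    rw [cfc_sub (fun _ => max c 0) (fun x => x) A (aux_cont A hA _) (aux_cont A hA _),
      cfc_const _ A hA.isSelfAdjoint, cfc_id' ℝ A hA.isSelfAdjoint,
      Algebra.algebraMap_eq_smul_one]
  rw [this]
  apply aux_cfc_psd A hA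
  intro x hx
  have := hc hx
  have := le_max_left c 0
  linarith

open Matrix in
lemma aux_dom {ι κ : Type*} [Fintype ι] [DecidableEq ι] [Fintype κ] [DecidableEq κ]
    (V : Matrix ι κ ℂ) (hV : Vᴴ * V = 1) (X : Matrix ι ι ℂ) (δ c : ℝ) (hδ : 0 < δ)
    (hX : X.PosSemidef) (hc : (c • (1 : Matrix ι ι ℂ) - X).PosSemidef) :
    ((V * ((1 + δ) • (Vᴴ * X * V)) * Vᴴ + ((1 + δ⁻¹) * c) • (1 - V * Vᴴ)) - X).PosSemidef := by
  obtain ⟨P, hP⟩ : ∃ P, P = V * Vᴴ := ⟨_, rfl⟩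
  have hPP : P * P = P := by
    rw [hP, Matrix.mul_assoc, ← Matrix.mul_assoc Vᴴ, hV, Matrix.one_mul]
  have hPH : Pᴴ = P := by rw [hP]; simp
  have e1 : V * ((1 + δ) • (Vᴴ * X * V)) * Vᴴ = (1 + δ) • (P * X * P) := by
    rw [hP]; simp [Matrix.mul_assoc]
  have h1 : (δ⁻¹ • ((δ • P - (1 - P)) * X * (δ • P - (1 - P))ᴴ)).PosSemidef :=
    (hX.mul_mul_conjTranspose_same _).smul (by positivity)
  have h2 : ((1 + δ⁻¹) • ((1 - P) * (c • (1 : Matrix ι ι ℂ) - X) * (1 - P)ᴴ)).PosSemidef :=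
    (hc.mul_mul_conjTranspose_same _).smul (by positivity)
  have h3 := h1.add h2
  rw [e1, ← hP]
  convert h3 using 1
  have e2 : (δ • P - (1 - P))ᴴ = δ • P - (1 - P) := by simp [hPH]
  have e3 : (1 - P)ᴴ = 1 - P := by simp [hPH]
  rw [e2, e3]
  have hXPP : ∀ Z : Matrix ι ι ℂ, Z * P * P = Z * P := fun Z => by rw [mul_assoc, hPP]
  simp only [mul_sub, sub_mul, smul_mul_assoc, mul_smul_comm, mul_one, one_mul, smul_sub, hPP, smul_smul, hXPP]
  match_scalars <;> field_simp <;> ring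

open Matrix in
lemma aux_hansen {ι κ : Type*} [Fintype ι] [DecidableEq ι] [Fintype κ] [DecidableEq κ]
    {f : ℝ → ℝ} (hc : ContinuousOn f (Set.Ici 0)) (hm : OperatorMonotone f)
    (V : Matrix ι κ ℂ) (hV : Vᴴ * V = 1) (X : Matrix ι ι ℂ) (hX : X.PosSemidef) :
    (cfc f (Vᴴ * X * V) - Vᴴ * cfc f X * V).PosSemidef := by
  obtain ⟨c, hc0, hcX⟩ := aux_bdd X hX.1
  obtain ⟨Y, hY⟩ : ∃ Y, Y = Vᴴ * X * V := ⟨_, rfl⟩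
  have hYp : Y.PosSemidef := hY ▸ hX.conjTranspose_mul_mul_same V
  rw [← hY]
  have hlim : Filter.Tendsto (fun δ : ℝ => cfc (fun x => f ((1 + δ) * x)) Y)
      (nhdsWithin 0 (Set.Ioi 0)) (nhds (cfc f Y)) := by
    apply aux_tendsto Y hYp.1
    intro x hx
    have hx0 := aux_spec Y hYp x hx
    refine (hc x hx0).tendsto.comp (tendsto_nhdsWithin_iff.2 ⟨?_, ?_⟩)
    · have : Filter.Tendsto (fun δ : ℝ => (1 + δ) * x) (nhds 0) (nhds ((1 + 0) * x)) :=
        Continuous.tendsto (by fun_prop) 0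
      simp only [add_zero, one_mul] at this
      exact this.mono_left nhdsWithin_le_nhds
    · filter_upwards [self_mem_nhdsWithin] with δ hδ
      have : (0:ℝ) < δ := hδ
      simp only [Set.mem_Ici]; positivity
  refine aux_closed _ _ (hlim.sub_const (Vᴴ * cfc f X * V)) ?_
  filter_upwards [self_mem_nhdsWithin] with δ hδ
  have hδ : (0:ℝ) < δ := hδ
  have hZ : cfc (fun x => f ((1 + δ) * x)) Y = cfc f ((1 + δ) • Y) := by
    have h0 := cfc_const_mul_id (1 + δ) Y hYp.1.isSelfAdjoint
    rw [← h0]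
    exact cfc_comp' f (fun x => (1 + δ) * x) Y
      ((hc.mono (by
        rintro _ ⟨x, hx, rfl⟩
        have := aux_spec Y hYp x hx
        simp only [Set.mem_Ici]; positivity))) (aux_cont Y hYp.1 _) hYp.1.isSelfAdjoint
  rw [hZ]
  have hdom := aux_dom V hV X δ c hδ hX hcX
  rw [← hY] at hdom
  obtain ⟨M, hM⟩ : ∃ M, M = V * ((1 + δ) • Y) * Vᴴ + ((1 + δ⁻¹) * c) • (1 - V * Vᴴ) := ⟨_, rfl⟩
  rw [← hM] at hdom
  have hMp : M.PosSemidef := by simpa using hdom.add hX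
  have hZp : ((1 + δ) • Y).PosSemidef := hYp.smul (by positivity)
  have hMV : M * V = V * ((1 + δ) • Y) := by
    rw [hM, Matrix.add_mul, Matrix.mul_assoc, hV, Matrix.smul_mul, Matrix.sub_mul,
      Matrix.mul_assoc V Vᴴ V, hV]
    simp
  have hf := aux_intertwine M _ hMp.1 hZp.1 V hMV f
  have h := (aux_mono hm X M hX hMp hdom).conjTranspose_mul_mul_same V
  rw [Matrix.mul_sub, Matrix.sub_mul, Matrix.mul_assoc Vᴴ (cfc f M), hf, ← Matrix.mul_assoc, hV,
    Matrix.one_mul] at h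
  exact h

open Matrix in
lemma aux_posdef {n : Type*} [Fintype n] [DecidableEq n]
    {f : ℝ → ℝ} (hc : ContinuousOn f (Set.Ici 0)) (hnn : ∀ x : ℝ, 0 ≤ x → 0 ≤ f x)
    (hm : OperatorMonotone f) (A B : Matrix n n ℂ) (hA : A.PosDef) (hB : B.PosDef)
    (hAB : (B - A).PosSemidef) :
    (cfc (fun x => x * f (1 / x)) B - cfc (fun x => x * f (1 / x)) A).PosSemidef := by
  have cmul : ∀ (C : Matrix n n ℂ) (hC : C.IsHermitian) (u v : ℝ → ℝ),
      cfc u C * cfc v C = cfc (fun x => u x * v x) C := fun C hC u v =>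
    (cfc_mul u v C (aux_cont C hC _) (aux_cont C hC _)).symm
  have hone : ∀ (C : Matrix n n ℂ) (hC : C.IsHermitian), cfc (fun _ => (1:ℝ)) C = 1 := 
    fun C hC => cfc_const_one ℝ C hC.isSelfAdjoint
  have hid : ∀ (C : Matrix n n ℂ) (hC : C.IsHermitian), cfc (fun x : ℝ => x) C = C := 
    fun C hC => cfc_id' ℝ C hC.isSelfAdjoint
  have hinvf : ∀ (C : Matrix n n ℂ) (hC : C.PosDef), 
      cfc f (cfc (fun x : ℝ => 1 / x) C) = cfc (fun x => f (1 / x)) C := fun C hC =>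
    (cfc_comp' f (fun x : ℝ => 1 / x) C (hc.mono (by
        rintro _ ⟨x, hx, rfl⟩
        have := aux_spec_pos C hC x hx
        simp only [Set.mem_Ici]; positivity)) (aux_cont C hC.1 _) hC.1.isSelfAdjoint).symm
  have hg : ∀ (C : Matrix n n ℂ) (hC : C.PosDef), 
      cfc Real.sqrt C * cfc f (cfc (fun x : ℝ => 1 / x) C) * cfc Real.sqrt C = 
      cfc (fun x => x * f (1 / x)) C := by
    intro C hC
    rw [hinvf C hC, cmul C hC.1, cmul C hC.1]
    apply cfc_congr
    intro x hx
    have := (aux_spec_pos C hC x hx).le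
    have h2 := Real.mul_self_sqrt this
    simp only
    linear_combination f (1 / x) * h2
  have hSiS : cfc Real.sqrt A * cfc (fun x : ℝ => 1 / x) A * cfc Real.sqrt A = 1 := by
    rw [cmul A hA.1, cmul A hA.1, ← hone A hA.1]
    apply cfc_congr
    intro x hx
    have := (aux_spec_pos A hA x hx)
    have h2 := Real.mul_self_sqrt this.le
    simp only
    field_simp
    nlinarith
  have hSS : cfc Real.sqrt A * cfc Real.sqrt A = A := by
    rw [cmul A hA.1]
    conv_rhs => rw [← hid A hA.1]
    apply cfc_congr
    intro x hx
    exact Real.mul_self_sqrt (aux_spec_pos A hA x hx).le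
  obtain ⟨Ti, hTi⟩ : ∃ Ti, Ti = cfc (fun x => 1 / Real.sqrt x) B := ⟨_, rfl⟩
  have hTiT : Ti * cfc Real.sqrt B = 1 := by
    rw [hTi, cmul B hB.1, ← hone B hB.1]
    apply cfc_congr
    intro x hx
    have := Real.sqrt_pos.2 (aux_spec_pos B hB x hx)
    simp only
    field_simp
  have hTTi : cfc Real.sqrt B * Ti = 1 := by
    rw [hTi, cmul B hB.1, ← hone B hB.1]
    apply cfc_congr
    intro x hx
    have := Real.sqrt_pos.2 (aux_spec_pos B hB x hx)
    simp only
    field_simp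
  have hTiTi : Ti * Ti = cfc (fun x : ℝ => 1 / x) B := by
    rw [hTi, cmul B hB.1]
    apply cfc_congr
    intro x hx
    have h0 := aux_spec_pos B hB x hx
    have := Real.sqrt_pos.2 h0
    have h2 := Real.mul_self_sqrt h0.le
    simp only
    field_simp
    nlinarith
  have hTiBTi : Ti * B * Ti = 1 := by
    conv_lhs => rw [← hid B hB.1, hTi, cmul B hB.1, cmul B hB.1]
    rw [← hone B hB.1]
    apply cfc_congr
    intro x hx
    have h0 := aux_spec_pos B hB x hx
    have := Real.sqrt_pos.2 h0
    have h2 := Real.mul_self_sqrt h0.le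
    simp only
    field_simp
    nlinarith
  have hTiH : Tiᴴ = Ti := hTi ▸ aux_herm B _
  have hgA := hg A hA
  have hgB := hg B hB
  obtain ⟨S, hS⟩ : ∃ S, S = cfc Real.sqrt A := ⟨_, rfl⟩
  have hSH : Sᴴ = S := hS ▸ aux_herm A _
  obtain ⟨T, hT⟩ : ∃ T, T = cfc Real.sqrt B := ⟨_, rfl⟩
  have hTH : Tᴴ = T := hT ▸ aux_herm B _
  obtain ⟨Ai, hAi⟩ : ∃ Ai, Ai = cfc (fun x : ℝ => 1 / x) A := ⟨_, rfl⟩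
  have hAip : Ai.PosSemidef := hAi ▸ aux_cfc_psd A hA.1 _ (fun x hx => by
    have := aux_spec_pos A hA x hx
    positivity)
  rw [← hS] at hgA hSiS hSS
  rw [← hT] at hgB hTTi hTiT
  rw [← hAi] at hgA hSiS
  obtain ⟨R, hR⟩ : ∃ R, R = Ti * (B - A) * Ti := ⟨_, rfl⟩
  have hRp : R.PosSemidef := by
    have := hAB.conjTranspose_mul_mul_same Ti
    rwa [hTiH, ← hR] at this
  obtain ⟨D, hD⟩ : ∃ D, D = cfc Real.sqrt R := ⟨_, rfl⟩
  have hDH : Dᴴ = D := hD ▸ aux_herm R _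
  have hDD : D * D = R := by
    rw [hD, cmul R hRp.1]
    conv_rhs => rw [← hid R hRp.1]
    apply cfc_congr
    intro x hx
    exact Real.mul_self_sqrt (aux_spec R hRp x hx)
  -- embeddings
  obtain ⟨E, F, hEE, hFF, hEF, hFE⟩ : ∃ E F : Matrix (n ⊕ n) n ℂ, Eᴴ * E = 1 ∧ Fᴴ * F = 1 ∧
      Eᴴ * F = 0 ∧ Fᴴ * E = 0 := by
    refine ⟨fromRows 1 0, fromRows 0 1, ?_, ?_, ?_, ?_⟩ <;>
    simp [conjTranspose_fromRows_eq_fromCols_conjTranspose, fromCols_mul_fromRows]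
  have hEE' : ∀ Z : Matrix n n ℂ, Eᴴ * (E * Z) = Z := fun Z => by
    rw [← Matrix.mul_assoc, hEE, Matrix.one_mul]
  have hFF' : ∀ Z : Matrix n n ℂ, Fᴴ * (F * Z) = Z := fun Z => by
    rw [← Matrix.mul_assoc, hFF, Matrix.one_mul]
  have hEF' : ∀ Z : Matrix n n ℂ, Eᴴ * (F * Z) = 0 := fun Z => by
    rw [← Matrix.mul_assoc, hEF, Matrix.zero_mul]
  have hFE' : ∀ Z : Matrix n n ℂ, Fᴴ * (E * Z) = 0 := fun Z => by
    rw [← Matrix.mul_assoc, hFE, Matrix.zero_mul]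
  obtain ⟨X, hX⟩ : ∃ X, X = E * Ai * Eᴴ := ⟨_, rfl⟩
  have hXp : X.PosSemidef := hX ▸ hAip.mul_mul_conjTranspose_same E
  have hXE : X * E = E * Ai := by rw [hX, Matrix.mul_assoc, hEE, Matrix.mul_one]
  have hXF : X * F = F * (0 : Matrix n n ℂ) := by
    rw [hX, Matrix.mul_assoc, hEF, Matrix.mul_zero, Matrix.mul_zero]
  have hfE := aux_intertwine X Ai hXp.1 hAip.1 E hXE f
  have hfF := aux_intertwine X 0 hXp.1 Matrix.isHermitian_zero F hXF f
  have hf0 : cfc f (0 : Matrix n n ℂ) = (f 0) • (1 : Matrix n n ℂ) := by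
    rw [cfc_apply_zero, Algebra.algebraMap_eq_smul_one]
  rw [hf0] at hfF
  obtain ⟨V, hVd⟩ : ∃ V, V = E * (S * Ti) + F * D := ⟨_, rfl⟩
  have hVH : Vᴴ = (Ti * S) * Eᴴ + D * Fᴴ := by
    rw [hVd]; simp [hSH, hTiH, hDH]
  have hV : Vᴴ * V = 1 := by
    rw [hVH, hVd]
    simp only [Matrix.add_mul, Matrix.mul_add, Matrix.mul_assoc, hEE', hFF', hEF', hFE', 
      Matrix.mul_zero, add_zero, zero_add]
    rw [hDD, hR, ← Matrix.mul_assoc S, hSS, ← Matrix.mul_assoc, ← hTiBTi]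
    noncomm_ring
  have hVX : Vᴴ * X * V = cfc (fun x : ℝ => 1 / x) B := by
    rw [Matrix.mul_assoc, hVH, hVd, Matrix.mul_add X, ← Matrix.mul_assoc X, ← Matrix.mul_assoc X, 
      hXE, hXF, ← hTiTi]
    simp only [Matrix.add_mul, Matrix.mul_add, Matrix.mul_assoc, hEE', hFF', hEF', hFE', 
      Matrix.mul_zero, add_zero, zero_add, Matrix.zero_mul]
    rw [← Matrix.mul_assoc Ai, ← Matrix.mul_assoc S, ← Matrix.mul_assoc S, hSiS, Matrix.one_mul]
  have hVf : Vᴴ * cfc f X * V = Ti * (S * cfc f Ai * S) * Ti + f 0 • R := by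
    rw [Matrix.mul_assoc, hVH, hVd, Matrix.mul_add (cfc f X), ← Matrix.mul_assoc (cfc f X), 
      ← Matrix.mul_assoc (cfc f X), hfE, hfF, ← hDD]
    simp only [Matrix.add_mul, Matrix.mul_add, Matrix.mul_assoc, hEE', hFF', hEF', hFE', 
      Matrix.mul_zero, add_zero, zero_add, Matrix.smul_mul, Matrix.mul_smul, Matrix.one_mul, smul_zero]
  have hh := aux_hansen hc hm V hV X hXp
  rw [hVX, hVf] at hh
  have h1 : (f 0 • R).PosSemidef := hRp.smul (hnn 0 le_rfl)
  have h2 := (hh.add h1).conjTranspose_mul_mul_same T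
  rw [hTH] at h2
  rw [← hgA, ← hgB]
  convert h2 using 1
  rw [sub_add_eq_sub_sub, sub_add_cancel, mul_sub, sub_mul]
  congr 1
  have : T * (Ti * (S * cfc f Ai * S) * Ti) * T = (T * Ti) * (S * cfc f Ai * S) * (Ti * T) := by
    noncomm_ring
  rw [this, hTTi, hTiT, mul_one, one_mul]

theorem stmt15 (f : ℝ → ℝ) (hc : ContinuousOn f (Set.Ici 0))
    (hnn : ∀ x : ℝ, 0 ≤ x → 0 ≤ f x) (hm : OperatorMonotone f) :
    ∃ g : ℝ → ℝ, ContinuousOn g (Set.Ici 0) ∧ (∀ x : ℝ, 0 ≤ x → 0 ≤ g x) ∧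
      OperatorMonotone g ∧ ∀ x : ℝ, 0 < x → g x = x * f (1 / x) := by
  obtain ⟨k, hk⟩ : ∃ k : ℝ → ℝ, k = fun x => x * f (1 / x) := ⟨_, rfl⟩
  have hk0 : ∀ x, 0 < x → 0 ≤ k x := fun x hx => by
    rw [hk]; exact mul_nonneg hx.le (hnn _ (by positivity))
  have hkc : ContinuousOn k (Set.Ioi 0) := by
    rw [hk]
    refine continuousOn_id.mul (hc.comp (continuousOn_const.div continuousOn_id ?_) ?_)
    · intro x hx; exact (ne_of_gt hx)
    · intro x hx
      have : (0:ℝ) < x := hx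
      simp only [Set.mem_Ici, id]; positivity
  have hpd : ∀ (n : ℕ) (A B : Matrix (Fin n) (Fin n) ℂ), A.PosDef → B.PosDef →
      (B - A).PosSemidef → (cfc k B - cfc k A).PosSemidef := by
    intro n A B hA hB hAB
    rw [hk]
    exact aux_posdef hc hnn hm A B hA hB hAB
  have hkm : MonotoneOn k (Set.Ioi 0) := by
    intro x hx y hy hxy
    have hx : (0:ℝ) < x := hx
    have hy : (0:ℝ) < y := hy
    have h := hpd 1 (algebraMap ℝ _ x) (algebraMap ℝ _ y)
      (by rw [Algebra.algebraMap_eq_smul_one]; exact Matrix.PosDef.one.smul hx)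
      (by rw [Algebra.algebraMap_eq_smul_one]; exact Matrix.PosDef.one.smul hy)
      (by rw [← map_sub, Algebra.algebraMap_eq_smul_one]
          exact Matrix.PosSemidef.one.smul (sub_nonneg.2 hxy))
    rw [cfc_algebraMap, cfc_algebraMap, ← map_sub] at h
    have h2 := h.diag_nonneg (i := 0)
    rw [Algebra.algebraMap_eq_smul_one] at h2
    simp at h2
    exact_mod_cast h2
  have hbdd : BddBelow (k '' Set.Ioi 0) := ⟨0, by rintro _ ⟨x, hx, rfl⟩; exact hk0 x hx⟩
  have hlim := hkm.tendsto_nhdsGT hbdd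
  obtain ⟨L, hL⟩ : ∃ L, L = sInf (k '' Set.Ioi 0) := ⟨_, rfl⟩
  rw [← hL] at hlim
  have hL0 : 0 ≤ L := by
    rw [hL]; apply Real.sInf_nonneg; rintro _ ⟨x, hx, rfl⟩; exact hk0 x hx
  obtain ⟨g, hg⟩ : ∃ g : ℝ → ℝ, g = Function.update k 0 L := ⟨_, rfl⟩
  have hgk : ∀ x, 0 < x → g x = k x := fun x hx => by
    rw [hg, Function.update_of_ne hx.ne']
  have hg0 : g 0 = L := by rw [hg]; simp
  have hgc : ContinuousOn g (Set.Ici 0) := by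
    intro x hx
    rcases (show (0:ℝ) ≤ x from hx).eq_or_lt with h | h
    · subst h
      rw [← continuousWithinAt_Ioi_iff_Ici, ContinuousWithinAt, hg0]
      refine hlim.congr' ?_
      filter_upwards [self_mem_nhdsWithin] with y hy
      exact (hgk y hy).symm
    · have h1 : ContinuousAt k x := hkc.continuousAt (Ioi_mem_nhds h)
      refine (h1.congr ?_).continuousWithinAt
      filter_upwards [Ioi_mem_nhds h] with y hy
      exact (hgk y hy).symm
  refine ⟨g, hgc, ?_, ?_, ?_⟩
  · intro x hx
    rcases hx.eq_or_lt with h | h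
    · rw [← h, hg0]; exact hL0
    · rw [hgk x h]; exact hk0 x h
  · intro n A B hA hB hAB
    have hl : ∀ C : Matrix (Fin n) (Fin n) ℂ, C.PosSemidef →
        Filter.Tendsto (fun δ : ℝ => cfc (fun x => g (x + δ)) C)
          (nhdsWithin 0 (Set.Ioi 0)) (nhds (cfc g C)) := by
      intro C hC
      apply aux_tendsto C hC.1
      intro x hx
      have hx0 := aux_spec C hC x hx
      refine (hgc x hx0).tendsto.comp (tendsto_nhdsWithin_iff.2 ⟨?_, ?_⟩)
      · have : Filter.Tendsto (fun δ : ℝ => x + δ) (nhds 0) (nhds (x + 0)) :=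
          Continuous.tendsto (by fun_prop) 0
        simp only [add_zero] at this
        exact this.mono_left nhdsWithin_le_nhds
      · filter_upwards [self_mem_nhdsWithin] with δ hδ
        have : (0:ℝ) < δ := hδ
        simp only [Set.mem_Ici]; positivity
    refine aux_closed _ _ ((hl B hB).sub (hl A hA)) ?_
    filter_upwards [self_mem_nhdsWithin] with δ hδ
    have hδ : (0:ℝ) < δ := hδ
    have hpos : ∀ C : Matrix (Fin n) (Fin n) ℂ, C.PosSemidef → (C + algebraMap ℝ _ δ).PosDef := by
      intro C hC
      rw [Algebra.algebraMap_eq_smul_one]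
      exact (Matrix.PosDef.one.smul hδ).posSemidef_add hC
    have he : ∀ C : Matrix (Fin n) (Fin n) ℂ, C.PosSemidef →
        cfc (fun x => g (x + δ)) C = cfc k (C + algebraMap ℝ _ δ) := by
      intro C hC
      have h0 : cfc (fun x : ℝ => x + δ) C = C + algebraMap ℝ _ δ := by
        rw [cfc_add_const δ (fun x : ℝ => x) C (aux_cont C hC.1 _) hC.1.isSelfAdjoint,
          cfc_id' ℝ C hC.1.isSelfAdjoint]
      rw [← h0, ← cfc_comp' k (fun x => x + δ) C (hkc.mono (by
        rintro _ ⟨x, hx, rfl⟩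
        have := aux_spec C hC x hx
        simp only [Set.mem_Ioi]; positivity)) (aux_cont C hC.1 _) hC.1.isSelfAdjoint]
      apply cfc_congr
      intro x hx
      have := aux_spec C hC x hx
      exact hgk _ (by positivity)
    rw [he A hA, he B hB]
    exact hpd n _ _ (hpos A hA) (hpos B hB) (by simpa using hAB)
  · intro x hx
    rw [hgk x hx, hk]
end

section
/- For every t ∈ [0,1], the function x ↦ ( (1 !_t x) + (1 !_{1-t} x) )/2 is an extreme point of the convex set S = { f : [0,∞) → [0,∞) : f is operator monotone, f(1) = 1, and f(x) = x·f(1/x) for all x > 0 }, viewed as a subset of the real vector space of functions from [0,∞) to ℝ. -/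
open MeasureTheory Real ComplexOrder

/-- Extension of a function `f : [0,∞) → ℝ` to all of `ℝ` (by junk value `0` on negatives);
this is the function applied to positive semidefinite matrices via the continuous
functional calculus. -/
noncomputable def ext (f : Set.Ici (0 : ℝ) → ℝ) : ℝ → ℝ :=
  fun x => if h : 0 ≤ x then f ⟨x, Set.mem_Ici.mpr h⟩ else 0

/-- The reciprocal map on `[0,∞)` (with the junk value `1/0 = 0`). -/
noncomputable def recip (x : Set.Ici (0 : ℝ)) : Set.Ici (0 : ℝ) :=
  ⟨1 / (x : ℝ), Set.mem_Ici.mpr (one_div_nonneg.mpr (Set.mem_Ici.mp x.2))⟩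

/-- The convex set of normalized symmetric operator monotone functions from `[0,∞)` to
`[0,∞)`, inside the real vector space of functions from `[0,∞)` to `ℝ`. -/
def Ssym : Set (Set.Ici (0 : ℝ) → ℝ) :=
  {f | (∀ x, 0 ≤ f x) ∧ OperatorMonotone (ext f) ∧
    f ⟨1, Set.mem_Ici.mpr zero_le_one⟩ = 1 ∧
    ∀ x : Set.Ici (0 : ℝ), 0 < (x : ℝ) → f x = (x : ℝ) * f (recip x)}

open Matrix in
lemma cfc_mulVec_eigen {n : ℕ} (A : Matrix (Fin n) (Fin n) ℂ) (hA : A.IsHermitian) (f : ℝ → ℝ)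
    (b : ℝ) (u : Fin n → ℂ) (hu : A *ᵥ u = (b : ℂ) • u) :
    cfc f A *ᵥ u = (f b : ℂ) • u := by
  classical
  set S : Finset ℝ := insert b (A.finite_real_spectrum).toFinset with hS
  set p : Polynomial ℝ := Lagrange.interpolate S id f with hp
  have hpe : ∀ x ∈ S, p.eval x = f x := fun x hx =>
    Lagrange.eval_interpolate_at_node f (v := id) (Function.injective_id.injOn) hx
  have h1 : cfc f A = cfc p.eval A := by
    apply cfc_congr
    intro x hx
    exact (hpe x (by simp [hS, hx])).symm
  have hsa : IsSelfAdjoint A := hA.isSelfAdjoint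
  rw [h1, cfc_polynomial p A, ← hpe b (by simp [hS])]
  clear_value p
  clear h1 hp hpe
  induction p using Polynomial.induction_on with
  | C a =>
    ext i
    simp [Algebra.algebraMap_eq_smul_one, Matrix.smul_mulVec]
  | add p q hp hq => simp [Matrix.add_mulVec, hp, hq, add_smul]
  | monomial k a ih =>
    rw [pow_succ, ← mul_assoc, map_mul, Polynomial.aeval_X, ← Matrix.mulVec_mulVec, hu,
      Matrix.mulVec_smul, ih, smul_smul]
    congr 1
    simp
    ring

open Matrix in
lemma inv_antitone {n : ℕ} (X Y : Matrix (Fin n) (Fin n) ℂ) (hX : X.PosDef) (hY : Y.PosDef)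
    (h : (Y - X).PosSemidef) : (X⁻¹ - Y⁻¹).PosSemidef := by
  classical
  have : Invertible Y := hY.isUnit.invertible
  have : Invertible X := hX.isUnit.invertible
  have : Invertible X⁻¹ := hX.inv.isUnit.invertible
  have h1 := Matrix.PosDef.fromBlocks₁₁ (1 : Matrix (Fin n) (Fin n) ℂ) X⁻¹ hY
  have h2 := Matrix.PosDef.fromBlocks₂₂ Y (1 : Matrix (Fin n) (Fin n) ℂ) hX.inv
  simp only [conjTranspose_one, one_mul, mul_one, Matrix.inv_inv_of_invertible] at h1 h2
  exact h1.1 (h2.2 h)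

lemma om_congr {f g : ℝ → ℝ} (h : ∀ x, 0 ≤ x → f x = g x) (hf : OperatorMonotone f) :
    OperatorMonotone g := by
  have key : ∀ (n : ℕ) (A : Matrix (Fin n) (Fin n) ℂ), A.PosSemidef → cfc g A = cfc f A := by
    intro n A hA
    apply cfc_congr
    intro x hx
    refine (h x ?_).symm
    rw [hA.1.spectrum_real_eq_range_eigenvalues] at hx
    obtain ⟨i, rfl⟩ := hx
    exact hA.eigenvalues_nonneg i
  intro n A B hA hB hAB
  rw [key n A hA, key n B hB]
  exact hf n A B hA hB hAB

lemma cont_spec {n : ℕ} (A : Matrix (Fin n) (Fin n) ℂ) (f : ℝ → ℝ) :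
    ContinuousOn f (spectrum ℝ A) := (A.finite_real_spectrum).continuousOn f

lemma om_half {f g : ℝ → ℝ} (hf : OperatorMonotone f) (hg : OperatorMonotone g) :
    OperatorMonotone (fun x => (f x + g x) / 2) := by
  have key : ∀ (n : ℕ) (A : Matrix (Fin n) (Fin n) ℂ), A.PosSemidef →
      cfc (fun x => (f x + g x) / 2) A = (1/2 : ℝ) • (cfc f A + cfc g A) := by
    intro n A hA
    have hsa : IsSelfAdjoint A := hA.1.isSelfAdjoint
    rw [← cfc_add (a := A) f g (cont_spec A f) (cont_spec A g),
      ← cfc_smul (1/2 : ℝ) _ A (cont_spec A _)]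
    congr 1
    ext x
    simp
    ring
  intro n A B hA hB hAB
  rw [key n A hA, key n B hB, ← smul_sub]
  apply Matrix.PosSemidef.smul _ (by norm_num)
  have := (hf n A B hA hB hAB).add (hg n A B hA hB hAB)
  convert this using 1
  abel

lemma om_whm (t : ℝ) (ht : t ∈ Set.Icc (0 : ℝ) 1) : OperatorMonotone (whm t) := by
  obtain ⟨h0, h1⟩ := ht
  rcases h0.eq_or_lt with rfl | h0
  · apply om_congr (f := fun _ => 1)
    · intro x hx
      unfold whm
      by_cases hx0 : x = 0
      · simp [hx0]
      · simp [hx0]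
    · intro n A B hA hB _
      have hsa : IsSelfAdjoint A := hA.1.isSelfAdjoint
      have hsb : IsSelfAdjoint B := hB.1.isSelfAdjoint
      rw [cfc_const_one ℝ A, cfc_const_one ℝ B, sub_self]
      exact Matrix.PosSemidef.zero
  rcases h1.eq_or_lt with rfl | h1
  · apply om_congr (f := fun x => x)
    · intro x hx
      simp [whm]
    · intro n A B hA hB hAB
      have hsa : IsSelfAdjoint A := hA.1.isSelfAdjoint
      have hsb : IsSelfAdjoint B := hB.1.isSelfAdjoint
      rw [cfc_id' ℝ A, cfc_id' ℝ B]
      exact hAB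
  have ht1 : 0 < 1 - t := by linarith
  have key : ∀ (n : ℕ) (A : Matrix (Fin n) (Fin n) ℂ), A.PosSemidef →
      ((1 - t) • A + t • (1 : Matrix (Fin n) (Fin n) ℂ)).PosDef ∧
      cfc (whm t) A = (1 / (1 - t)) • (1 : Matrix (Fin n) (Fin n) ℂ) -
        (t / (1 - t)) • ((1 - t) • A + t • (1 : Matrix (Fin n) (Fin n) ℂ))⁻¹ := by
    intro n A hA
    have hsa : IsSelfAdjoint A := hA.1.isSelfAdjoint
    have hspec : ∀ x ∈ spectrum ℝ A, 0 ≤ x := by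
      intro x hx
      rw [hA.1.spectrum_real_eq_range_eigenvalues] at hx
      obtain ⟨i, rfl⟩ := hx
      exact hA.eigenvalues_nonneg i
    refine ⟨?_, ?_⟩
    · exact Matrix.PosDef.posSemidef_add (hA.smul ht1.le) (Matrix.PosDef.one.smul h0)
    · have hg : cfc (fun x : ℝ => (1 - t) * x + t) A
          = (1 - t) • A + t • (1 : Matrix (Fin n) (Fin n) ℂ) := by
        have := cfc_polynomial (Polynomial.C (1 - t) * Polynomial.X + Polynomial.C t) A hsa
        simp only [map_add, map_mul, Polynomial.aeval_X, Polynomial.aeval_C,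
          Algebra.algebraMap_eq_smul_one, smul_mul_assoc, one_mul] at this
        rw [← this]
        congr 1
        ext x
        simp
      have hinv : ((1 - t) • A + t • (1 : Matrix (Fin n) (Fin n) ℂ))⁻¹
          = cfc (fun x : ℝ => ((1 - t) * x + t)⁻¹) A := by
        apply Matrix.inv_eq_left_inv
        rw [← hg, ← cfc_mul _ _ A (cont_spec A _) (cont_spec A _), ← cfc_const_one ℝ A]
        apply cfc_congr
        intro x hx
        have := hspec x hx
        have h3 : 0 < (1 - t) * x + t := by positivity
        exact inv_mul_cancel₀ h3.ne'
      rw [hinv, ← cfc_const_one ℝ A, ← cfc_smul _ _ A (cont_spec A _),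
        ← cfc_smul _ _ A (cont_spec A _), ← cfc_sub _ _ A (cont_spec A _) (cont_spec A _)]
      apply cfc_congr
      intro x hx
      have := hspec x hx
      have h3 : 0 < (1 - t) * x + t := by positivity
      simp only [whm, h0.ne', false_and, if_false, smul_eq_mul]
      field_simp
      ring
  intro n A B hA hB hAB
  obtain ⟨pA, eA⟩ := key n A hA
  obtain ⟨pB, eB⟩ := key n B hB
  rw [eA, eB]
  have h4 := inv_antitone _ _ pA pB (by
    have := hAB.smul ht1.le
    convert this using 1
    rw [smul_sub]; abel)
  have h5 := h4.smul (show 0 ≤ t / (1 - t) by positivity)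
  convert h5 using 1
  rw [smul_sub]; abel

/-- Auxiliary rational identity: the secular equation. -/
lemma secular (a0 b0 a1 b1 a2 b2 x : ℝ) (h1 : a0 ≠ a1) (h2 : a0 ≠ a2) (h3 : a1 ≠ a2)
    (hx0 : x ≠ a0) (hx1 : x ≠ a1) (hx2 : x ≠ a2) :
    -((a0 - b0) * (a0 - b1) * (a0 - b2)) / ((a0 - a1) * (a0 - a2)) / (x - a0)
     + -((a1 - b0) * (a1 - b1) * (a1 - b2)) / ((a1 - a0) * (a1 - a2)) / (x - a1)
     + -((a2 - b0) * (a2 - b1) * (a2 - b2)) / ((a2 - a0) * (a2 - a1)) / (x - a2)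
     = 1 - ((x - b0) * (x - b1) * (x - b2)) / ((x - a0) * (x - a1) * (x - a2)) := by
  have := sub_ne_zero.2 h1
  have := sub_ne_zero.2 h2
  have := sub_ne_zero.2 h3
  have := sub_ne_zero.2 h1.symm
  have := sub_ne_zero.2 h2.symm
  have := sub_ne_zero.2 h3.symm
  have := sub_ne_zero.2 hx0
  have := sub_ne_zero.2 hx1
  have := sub_ne_zero.2 hx2
  rw [show a1 - a0 = -(a0 - a1) by ring, show a2 - a0 = -(a0 - a2) by ring,
    show a2 - a1 = -(a1 - a2) by ring]
  field_simp
  ring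

/-- Partial fractions. -/
lemma partfrac (b0 b1 b2 a c0 c1 c2 : ℝ) (h1 : b0 ≠ b1) (h2 : b0 ≠ b2) (h3 : b1 ≠ b2)
    (hx0 : a ≠ b0) (hx1 : a ≠ b1) (hx2 : a ≠ b2) :
    (c2 * a ^ 2 + c1 * a + c0) / ((a - b0) * (a - b1) * (a - b2)) =
     (c2 * b0 ^ 2 + c1 * b0 + c0) / ((b0 - b1) * (b0 - b2)) / (a - b0)
     + (c2 * b1 ^ 2 + c1 * b1 + c0) / ((b1 - b0) * (b1 - b2)) / (a - b1)
     + (c2 * b2 ^ 2 + c1 * b2 + c0) / ((b2 - b0) * (b2 - b1)) / (a - b2) := by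
  have := sub_ne_zero.2 h1
  have := sub_ne_zero.2 h2
  have := sub_ne_zero.2 h3
  have := sub_ne_zero.2 hx0
  have := sub_ne_zero.2 hx1
  have := sub_ne_zero.2 hx2
  rw [show b1 - b0 = -(b0 - b1) by ring, show b2 - b0 = -(b0 - b2) by ring,
    show b2 - b1 = -(b1 - b2) by ring]
  field_simp
  ring

lemma interp3 (b0 b1 b2 y0 y1 y2 : ℝ) (h1 : b0 ≠ b1) (h2 : b0 ≠ b2) (h3 : b1 ≠ b2) :
    ∃ c0 c1 c2 : ℝ, c2 * b0 ^ 2 + c1 * b0 + c0 = y0 ∧ c2 * b1 ^ 2 + c1 * b1 + c0 = y1 ∧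
      c2 * b2 ^ 2 + c1 * b2 + c0 = y2 := by
  have := sub_ne_zero.2 h1
  have := sub_ne_zero.2 h2
  have := sub_ne_zero.2 h3
  set l0 := y0 / ((b0 - b1) * (b0 - b2))
  set l1 := -y1 / ((b0 - b1) * (b1 - b2))
  set l2 := y2 / ((b0 - b2) * (b1 - b2))
  have e0 : y0 = l0 * ((b0 - b1) * (b0 - b2)) := by simp only [l0]; field_simp
  have e1 : y1 = -(l1 * ((b0 - b1) * (b1 - b2))) := by simp only [l1]; field_simp
  have e2 : y2 = l2 * ((b0 - b2) * (b1 - b2)) := by simp only [l2]; field_simp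
  refine ⟨l0 * b1 * b2 + l1 * b0 * b2 + l2 * b0 * b1,
    -(l0 * (b1 + b2) + l1 * (b0 + b2) + l2 * (b0 + b1)), l0 + l1 + l2, ?_, ?_, ?_⟩
  · rw [e0]; ring
  · rw [e1]; ring
  · rw [e2]; ring

open Matrix in
/-- For interlacing points there are `A ≤ B` and vectors `v` (for each quadratic `p`)
such that, for every function `q`, the two functional calculi act explicitly. -/
lemma interlace (a b : Fin 3 → ℝ) (ha0 : 0 ≤ a 0) (h1 : a 0 < b 0) (h2 : b 0 < a 1)
    (h3 : a 1 < b 1) (h4 : b 1 < a 2) (h5 : a 2 < b 2) :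
    ∃ (A B : Matrix (Fin 3) (Fin 3) ℂ) (w : Fin 3 → ℝ), A.PosSemidef ∧ B.PosSemidef ∧
      (B - A).PosSemidef ∧ (∀ i, w i ≠ 0) ∧
      ∀ (q : ℝ → ℝ) (p0 p1 p2 c0 c1 c2 : ℝ),
        (∀ j, q (b j) * (p2 * b j ^ 2 + p1 * b j + p0) = c2 * b j ^ 2 + c1 * b j + c0) →
        (cfc q B - cfc q A) *ᵥ (fun i => ((w i * (p2 * a i ^ 2 + p1 * a i + p0) : ℝ) : ℂ)) =
          fun i => ((w i * ((c2 * a i ^ 2 + c1 * a i + c0) -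
            q (a i) * (p2 * a i ^ 2 + p1 * a i + p0)) : ℝ) : ℂ) := by
  set W : Fin 3 → ℝ := ![
    -((a 0 - b 0) * (a 0 - b 1) * (a 0 - b 2)) / ((a 0 - a 1) * (a 0 - a 2)),
    -((a 1 - b 0) * (a 1 - b 1) * (a 1 - b 2)) / ((a 1 - a 0) * (a 1 - a 2)),
    -((a 2 - b 0) * (a 2 - b 1) * (a 2 - b 2)) / ((a 2 - a 0) * (a 2 - a 1))] with hW
  have hWpos : ∀ i, 0 < W i := by
    intro i
    fin_cases i
    · have e : W 0 = ((b 0 - a 0) * (b 1 - a 0) * (b 2 - a 0)) / ((a 1 - a 0) * (a 2 - a 0)) := by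
        simp only [hW, Matrix.cons_val_zero]; congr 1 <;> ring
      show 0 < W 0
      rw [e]
      have := sub_pos.2 h1
      have : 0 < b 1 - a 0 := by linarith
      have : 0 < b 2 - a 0 := by linarith
      have : 0 < a 1 - a 0 := by linarith
      have : 0 < a 2 - a 0 := by linarith
      positivity
    · have e : W 1 = ((a 1 - b 0) * (b 1 - a 1) * (b 2 - a 1)) / ((a 1 - a 0) * (a 2 - a 1)) := by
        simp only [hW, Matrix.cons_val_one, Matrix.cons_val_zero]
        rw [← neg_div_neg_eq]; congr 1 <;> ring
      show 0 < W 1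
      rw [e]
      have : 0 < a 1 - b 0 := by linarith
      have : 0 < b 1 - a 1 := by linarith
      have : 0 < b 2 - a 1 := by linarith
      have : 0 < a 1 - a 0 := by linarith
      have : 0 < a 2 - a 1 := by linarith
      positivity
    · have e : W 2 = ((a 2 - b 0) * (a 2 - b 1) * (b 2 - a 2)) / ((a 2 - a 0) * (a 2 - a 1)) := by
        simp only [hW, Matrix.cons_val]; congr 1; ring
      show 0 < W 2
      rw [e]
      have : 0 < a 2 - b 0 := by linarith
      have : 0 < a 2 - b 1 := by linarith
      have : 0 < b 2 - a 2 := by linarith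
      have : 0 < a 2 - a 0 := by linarith
      have : 0 < a 2 - a 1 := by linarith
      positivity
  have hab : ∀ i j, b j - a i ≠ 0 := by
    intro i j
    fin_cases i <;> fin_cases j <;> simp only [Fin.zero_eta, Fin.mk_one, Fin.reduceFinMk] <;>
      intro h <;> linarith
  have hsec : ∀ j, ∑ i, W i / (b j - a i) = 1 := by
    intro j
    have := secular (a 0) (b 0) (a 1) (b 1) (a 2) (b 2) (b j) (by linarith) (by linarith)
      (by linarith) (sub_ne_zero.1 (hab 0 j)) (sub_ne_zero.1 (hab 1 j)) (sub_ne_zero.1 (hab 2 j))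
    have hz : (b j - b 0) * (b j - b 1) * (b j - b 2) = 0 := by
      fin_cases j <;> simp
    rw [hz] at this
    rw [Fin.sum_univ_three]
    simp only [hW, Matrix.cons_val_zero, Matrix.cons_val_one, Matrix.cons_val]
    rw [this]; simp
  set s : Fin 3 → ℝ := fun i => Real.sqrt (W i) with hs
  have hss : ∀ i, s i * s i = W i := fun i => Real.mul_self_sqrt (hWpos i).le
  have hs0 : ∀ i, s i ≠ 0 := fun i => (Real.sqrt_pos.2 (hWpos i)).ne'
  set sc : Fin 3 → ℂ := fun i => (s i : ℂ) with hsc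
  set A : Matrix (Fin 3) (Fin 3) ℂ := Matrix.diagonal (fun i => (a i : ℂ)) with hA
  set R : Matrix (Fin 3) (Fin 3) ℂ := Matrix.vecMulVec sc (star sc) with hR
  have hApsd : A.PosSemidef := by
    apply Matrix.PosSemidef.diagonal
    intro i
    show (0 : ℂ) ≤ (a i : ℂ)
    rw [Complex.zero_le_real]
    fin_cases i <;> simp only [Fin.zero_eta, Fin.mk_one, Fin.reduceFinMk] <;> linarith
  have hRpsd : R.PosSemidef := Matrix.posSemidef_vecMulVec_self_star sc
  have hBpsd : (A + R).PosSemidef := hApsd.add hRpsd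
  set u : Fin 3 → Fin 3 → ℂ := fun j i => ((s i / (b j - a i) : ℝ) : ℂ) with hu
  have hBu : ∀ j, (A + R) *ᵥ u j = (b j : ℂ) • u j := by
    intro j
    ext i
    have hd : star sc ⬝ᵥ u j = 1 := by
      simp only [dotProduct, hu, hsc, Pi.star_apply, Complex.star_def, Complex.conj_ofReal]
      rw [← Complex.ofReal_one, ← hsec j]
      push_cast
      apply Finset.sum_congr rfl
      intro i _
      rw [← hss i]; push_cast; ring
    rw [Matrix.add_mulVec, hR, Matrix.vecMulVec_mulVec, hd]
    simp only [hA, Pi.add_apply, Matrix.mulVec_diagonal, Pi.smul_apply, hu, hsc, smul_eq_mul]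
    have := hab i j
    simp only [MulOpposite.op_one, one_smul]
    rw [← Complex.ofReal_mul, ← Complex.ofReal_add, ← Complex.ofReal_mul]
    congr 1
    field_simp
    ring
  have hAe : ∀ (q : ℝ → ℝ) (v : Fin 3 → ℂ), cfc q A *ᵥ v = fun i => (q (a i) : ℂ) * v i := by
    intro q v
    have hv : v = ∑ i, v i • (Pi.single i 1 : Fin 3 → ℂ) := by
      ext k; simp [Finset.sum_apply, Pi.single_apply]
    have he : ∀ i, cfc q A *ᵥ (Pi.single i 1 : Fin 3 → ℂ) = (q (a i) : ℂ) • Pi.single i 1 := by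
      intro i
      apply cfc_mulVec_eigen A hApsd.1
      ext k
      rw [hA, Matrix.mulVec_diagonal]
      by_cases hk : k = i
      · subst hk; simp
      · simp [hk]
    conv_lhs => rw [hv]
    rw [Matrix.mulVec_sum]
    simp only [Matrix.mulVec_smul, he]
    ext k
    simp [Finset.sum_apply, Pi.single_apply, mul_comm]
  set w : Fin 3 → ℝ := fun i => s i / ((a i - b 0) * (a i - b 1) * (a i - b 2)) with hw
  have hab' : ∀ i j, a i - b j ≠ 0 := fun i j h => hab i j (by linarith)
  -- expansion of vectors in the eigenbasis of `B`
  set D : Fin 3 → ℝ := ![(b 0 - b 1) * (b 0 - b 2), (b 1 - b 0) * (b 1 - b 2),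
    (b 2 - b 0) * (b 2 - b 1)] with hD
  have hexp : ∀ c0 c1 c2 : ℝ,
      (fun i => ((w i * (c2 * a i ^ 2 + c1 * a i + c0) : ℝ) : ℂ)) =
      ∑ j, ((-(c2 * b j ^ 2 + c1 * b j + c0) / D j : ℝ) : ℂ) • u j := by
    intro c0 c1 c2
    ext i
    have := partfrac (b 0) (b 1) (b 2) (a i) c0 c1 c2 (by linarith) (by linarith)
      (by linarith) (sub_ne_zero.1 (hab' i 0)) (sub_ne_zero.1 (hab' i 1))
      (sub_ne_zero.1 (hab' i 2))
    have e : w i * (c2 * a i ^ 2 + c1 * a i + c0) =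
      s i * ((c2 * a i ^ 2 + c1 * a i + c0) / ((a i - b 0) * (a i - b 1) * (a i - b 2))) := by
      simp only [hw]; ring
    rw [e, this]
    simp only [Finset.sum_apply, Pi.smul_apply, hu, smul_eq_mul]
    rw [Fin.sum_univ_three]
    rw [← Complex.ofReal_mul, ← Complex.ofReal_mul, ← Complex.ofReal_mul, ← Complex.ofReal_add,
      ← Complex.ofReal_add]
    congr 1
    simp only [hD, Matrix.cons_val_zero, Matrix.cons_val_one, Matrix.cons_val]
    rw [show b 0 - a i = -(a i - b 0) by ring, show b 1 - a i = -(a i - b 1) by ring,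
      show b 2 - a i = -(a i - b 2) by ring]
    simp only [div_neg, neg_div]
    ring
  refine ⟨A, A + R, w, hApsd, hBpsd, by simpa using hRpsd, ?_, ?_⟩
  · intro i
    exact div_ne_zero (hs0 i) (mul_ne_zero (mul_ne_zero (hab' i 0) (hab' i 1)) (hab' i 2))
  · intro q p0 p1 p2 c0 c1 c2 hq
    have hB : cfc q (A + R) *ᵥ (fun i => ((w i * (p2 * a i ^ 2 + p1 * a i + p0) : ℝ) : ℂ)) =
        (fun i => ((w i * (c2 * a i ^ 2 + c1 * a i + c0) : ℝ) : ℂ)) := by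
      rw [hexp p0 p1 p2, hexp c0 c1 c2, Matrix.mulVec_sum]
      apply Finset.sum_congr rfl
      intro j _
      rw [Matrix.mulVec_smul, cfc_mulVec_eigen _ hBpsd.1 q (b j) (u j) (hBu j), smul_smul,
        ← Complex.ofReal_mul, ← hq j]
      congr 2
      ring
    rw [Matrix.sub_mulVec, hB, hAe]
    ext i
    simp only [Pi.sub_apply]
    push_cast
    ring

open Matrix in
lemma kernel_lemma (a b : Fin 3 → ℝ) (ha0 : 0 ≤ a 0) (h1 : a 0 < b 0) (h2 : b 0 < a 1)
    (h3 : a 1 < b 1) (h4 : b 1 < a 2) (h5 : a 2 < b 2) (q r : ℝ → ℝ)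
    (hq : OperatorMonotone q) (hr : OperatorMonotone r) (α β : ℝ) (hα : 0 < α) (hβ : 0 < β)
    (p0 p1 p2 n0 n1 n2 : ℝ)
    (hfa : ∀ i, (α * q (a i) + β * r (a i)) * (p2 * a i ^ 2 + p1 * a i + p0) =
      n2 * a i ^ 2 + n1 * a i + n0)
    (hfb : ∀ i, (α * q (b i) + β * r (b i)) * (p2 * b i ^ 2 + p1 * b i + p0) =
      n2 * b i ^ 2 + n1 * b i + n0) :
    ∃ c0 c1 c2 : ℝ, ∀ i,
      q (a i) * (p2 * a i ^ 2 + p1 * a i + p0) = c2 * a i ^ 2 + c1 * a i + c0 ∧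
      q (b i) * (p2 * b i ^ 2 + p1 * b i + p0) = c2 * b i ^ 2 + c1 * b i + c0 := by
  obtain ⟨A, B, w, hA, hB, hAB, hw, key⟩ := interlace a b ha0 h1 h2 h3 h4 h5
  obtain ⟨c0, c1, c2, e0, e1, e2⟩ := interp3 (b 0) (b 1) (b 2)
    (q (b 0) * (p2 * b 0 ^ 2 + p1 * b 0 + p0)) (q (b 1) * (p2 * b 1 ^ 2 + p1 * b 1 + p0))
    (q (b 2) * (p2 * b 2 ^ 2 + p1 * b 2 + p0)) (by linarith) (by linarith) (by linarith)
  have hcb : ∀ j, q (b j) * (p2 * b j ^ 2 + p1 * b j + p0) = c2 * b j ^ 2 + c1 * b j + c0 := by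
    intro j
    fin_cases j
    · exact e0.symm
    · exact e1.symm
    · exact e2.symm
  have Mq := hq 3 A B hA hB hAB
  have Mr := hr 3 A B hA hB hAB
  have kq := key q p0 p1 p2 c0 c1 c2 hcb
  have kr := key r p0 p1 p2 ((n0 - α * c0) / β) ((n1 - α * c1) / β) ((n2 - α * c2) / β) (by
    intro j
    have e1 := hfb j
    have e2 := hcb j
    field_simp
    linear_combination e1 - α * e2)
  set v : Fin 3 → ℂ := fun i => ((w i * (p2 * a i ^ 2 + p1 * a i + p0) : ℝ) : ℂ) with hv
  have kr' : (cfc r B - cfc r A) *ᵥ v = ((-(α / β) : ℝ) : ℂ) • ((cfc q B - cfc q A) *ᵥ v) := by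
    rw [kr, kq]
    ext i
    simp only [Pi.smul_apply, smul_eq_mul]
    rw [← Complex.ofReal_mul]
    congr 1
    have e1 := hfa i
    field_simp
    linear_combination (-(w i)) * e1
  have n1 := Mq.dotProduct_mulVec_nonneg v
  have n2 := Mr.dotProduct_mulVec_nonneg v
  rw [kr', dotProduct_smul, smul_eq_mul] at n2
  have hz : star v ⬝ᵥ ((cfc q B - cfc q A) *ᵥ v) = 0 := by
    apply le_antisymm _ n1
    have hpos : (0 : ℂ) ≤ ((β / α : ℝ) : ℂ) := by
      rw [Complex.zero_le_real]; positivity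
    have := mul_nonneg hpos n2
    rw [← mul_assoc, ← Complex.ofReal_mul,
      show β / α * -(α / β) = -1 by field_simp] at this
    simpa using this
  rw [Mq.dotProduct_mulVec_zero_iff, kq] at hz
  refine ⟨c0, c1, c2, fun i => ⟨?_, hcb i⟩⟩
  have := congrFun hz i
  simp only [Pi.zero_apply, Complex.ofReal_eq_zero] at this
  have := (mul_eq_zero.1 this).resolve_left (hw i)
  linarith

/-- The half-sum times the symmetric quadratic. -/
lemma f_mul (t y : ℝ) (ht : t ∈ Set.Icc (0 : ℝ) 1) (hy : 0 ≤ y) :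
    ((whm t y + whm (1 - t) y) / 2) * ((t * (1 - t)) * y ^ 2 + (t ^ 2 + (1 - t) ^ 2) * y
      + t * (1 - t)) = (1 / 2) * y ^ 2 + (1 / 2) * y + 0 := by
  obtain ⟨h0, h1⟩ := ht
  rcases hy.eq_or_lt with rfl | hy
  · by_cases h0' : t = 0
    · simp [h0']
    by_cases h1' : t = 1
    · simp [h1']
    have : 1 - t ≠ 0 := fun h => h1' (by linarith)
    simp [whm, h0', this]
  · have p1 : 0 < (1 - t) * y + t := by
      rcases h0.eq_or_lt with rfl | h0
      · simpa using hy
      · have : 0 ≤ (1 - t) * y := mul_nonneg (by linarith) hy.le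
        linarith
    have p2 : 0 < t * y + (1 - t) := by
      rcases h1.eq_or_lt with rfl | h1
      · simpa using hy
      · have : 0 ≤ t * y := mul_nonneg (by linarith) hy.le
        linarith
    simp only [whm, hy.ne', and_false, if_false]
    rw [show 1 - (1 - t) = t by ring,
      show (t * (1 - t)) * y ^ 2 + (t ^ 2 + (1 - t) ^ 2) * y + t * (1 - t)
        = ((1 - t) * y + t) * (t * y + (1 - t)) by ring]
    have q1 := p1.ne'
    have q2 := p2.ne'
    have e1 : y / ((1 - t) * y + t) * ((1 - t) * y + t) = y := div_mul_cancel₀ _ q1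
    have e2 : y / (t * y + (1 - t)) * (t * y + (1 - t)) = y := div_mul_cancel₀ _ q2
    linear_combination (t * y + (1 - t)) / 2 * e1 + ((1 - t) * y + t) / 2 * e2

lemma ext_of_nonneg (f : Set.Ici (0 : ℝ) → ℝ) (x : ℝ) (hx : 0 ≤ x) :
    ext f x = f ⟨x, hx⟩ := by simp [ext, hx]

lemma ext_symm {q : Set.Ici (0 : ℝ) → ℝ} (hq : q ∈ Ssym) (x : ℝ) (hx : 0 < x) :
    ext q x = x * ext q (1 / x) := by
  rw [ext_of_nonneg _ _ hx.le, ext_of_nonneg _ _ (by positivity)]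
  exact hq.2.2.2 ⟨x, hx.le⟩ hx

lemma flip_quad (y i p0 p1 : ℝ) (h : y * i = 1) :
    y ^ 2 * (p0 * i ^ 2 + p1 * i + p0) = p0 * y ^ 2 + p1 * y + p0 := by
  linear_combination (p0 * (y * i + 1) + p1 * y) * h

lemma flip_eq (y i z z' p0 p1 c0 c1 c2 : ℝ) (h : y * i = 1) (s : z = y * z')
    (g : z * (p0 * y ^ 2 + p1 * y + p0) = c2 * y ^ 2 + c1 * y + c0)
    (g' : z' * (p0 * i ^ 2 + p1 * i + p0) = c2 * i ^ 2 + c1 * i + c0) :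
    c0 * y ^ 3 + (c1 - c2) * y ^ 2 + (c2 - c1) * y - c0 = 0 := by
  have hN : y ^ 3 * (c2 * i ^ 2 + c1 * i + c0) = c2 * y + c1 * y ^ 2 + c0 * y ^ 3 := by
    linear_combination (c2 * y * (y * i + 1) + c1 * y ^ 2) * h
  have hP := flip_quad y i p0 p1 h
  linear_combination -hN - y ^ 3 * g' + g + y * z' * hP - (p0 * y ^ 2 + p1 * y + p0) * s

/-- Core uniqueness statement. -/
lemma unique_core (t : ℝ) (ht : t ∈ Set.Icc (0 : ℝ) 1) (q r : Set.Ici (0 : ℝ) → ℝ)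
    (hq : q ∈ Ssym) (hr : r ∈ Ssym) (α β : ℝ) (hα : 0 < α) (hβ : 0 < β)
    (hf : ∀ y : ℝ, 0 ≤ y → α * ext q y + β * ext r y = (whm t y + whm (1 - t) y) / 2) :
    ∀ y : ℝ, 0 ≤ y → ext q y = (whm t y + whm (1 - t) y) / 2 := by
  have hq1 : ext q 1 = 1 := by
    rw [ext_of_nonneg _ _ zero_le_one]; exact hq.2.2.1
  -- values on the interval (0,1), and the vanishing at zero
  have main : ∀ x : ℝ, 0 < x → x < 1 →
      ext q x * ((t * (1 - t)) * x ^ 2 + (t ^ 2 + (1 - t) ^ 2) * x + t * (1 - t))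
        = (1 / 2) * x ^ 2 + (1 / 2) * x ∧ ext q 0 * (t * (1 - t)) = 0 := by
    intro x hx hx1
    have hxi : 1 < 1 / x := by rw [lt_div_iff₀ hx]; linarith
    have hxi2 : 1 / x < 2 / x := by gcongr; norm_num
    obtain ⟨c0, c1, c2, h⟩ := kernel_lemma ![0, x, 1 / x] ![x / 2, 1, 2 / x] (by simp)
      (by simpa using hx) (by simpa using hx)
      (by simpa using hx1) (by simpa using hxi) (by simpa using hxi2)
      (ext q) (ext r) hq.2.1 hr.2.1 α β hα hβ (t * (1 - t)) (t ^ 2 + (1 - t) ^ 2) (t * (1 - t))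
      0 (1 / 2) (1 / 2)
      (by
        intro i
        have hi : 0 ≤ (![0, x, 1 / x] : Fin 3 → ℝ) i := by
          fin_cases i <;> simp <;> positivity
        rw [hf _ hi]
        exact f_mul t _ ht hi)
      (by
        intro i
        have hi : 0 ≤ (![x / 2, 1, 2 / x] : Fin 3 → ℝ) i := by
          fin_cases i <;> simp <;> positivity
        rw [hf _ hi]
        exact f_mul t _ ht hi)
    obtain ⟨g0, g1⟩ := h 0
    obtain ⟨g2, g3⟩ := h 1
    obtain ⟨g4, g5⟩ := h 2
    simp only [Matrix.cons_val_zero, Matrix.cons_val_one, Matrix.cons_val] at g0 g1 g2 g3 g4 g5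
    have s1 := ext_symm hq x hx
    have s2 := ext_symm hq (x / 2) (by positivity)
    rw [one_div_div] at s2
    rw [hq1] at g3
    generalize ext q 0 = z0 at *
    generalize ext q (x / 2) = z1 at *
    generalize ext q x = z2 at *
    generalize ext q (1 / x) = z3 at *
    generalize ext q (2 / x) = z4 at *
    have k1 : c0 * x ^ 3 + (c1 - c2) * x ^ 2 + (c2 - c1) * x - c0 = 0 := 
      flip_eq x (1 / x) _ _ _ _ _ _ _ (by field_simp) s1 g2 g4
    have k2 : c0 * (x / 2) ^ 3 + (c1 - c2) * (x / 2) ^ 2 + (c2 - c1) * (x / 2) - c0 = 0 := 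
      flip_eq (x / 2) (2 / x) _ _ _ _ _ _ _ (by field_simp) s2 g1 g5
    have hx1' : x - 1 ≠ 0 := by linarith
    have hx2' : x / 2 - 1 ≠ 0 := by linarith
    have m1 : c0 * x ^ 2 + (c0 + c1 - c2) * x + c0 = 0 := by
      apply mul_left_cancel₀ hx1'
      linear_combination k1
    have m2 : c0 * (x / 2) ^ 2 + (c0 + c1 - c2) * (x / 2) + c0 = 0 := by
      apply mul_left_cancel₀ hx2'
      linear_combination k2
    have hc0 : c0 = 0 := by
      have : 2 - x ^ 2 ≠ 0 := by nlinarith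
      apply mul_left_cancel₀ this
      linear_combination 4 * m2 - 2 * m1
    subst hc0
    have hc12 : c1 = c2 := by
      have : (c1 - c2) * x = 0 := by linear_combination m1
      have := (mul_eq_zero.1 this).resolve_right hx.ne'
      linarith
    subst hc12
    have hc : c1 = 1 / 2 := by linear_combination (-1 / 2) * g3
    subst hc
    exact ⟨by linear_combination g2, by linear_combination g0⟩
  have ht0 := ht.1
  have ht1 := ht.2
  have hpp : ∀ x : ℝ, 0 < x →
      (t * (1 - t)) * x ^ 2 + (t ^ 2 + (1 - t) ^ 2) * x + t * (1 - t) ≠ 0 := by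
    intro x hx
    have h1 : 0 ≤ t * (1 - t) := mul_nonneg ht0 (by linarith)
    have h2 : 0 < t ^ 2 + (1 - t) ^ 2 := by nlinarith [sq_nonneg (2 * t - 1)]
    positivity
  have lt1 : ∀ x : ℝ, 0 < x → x < 1 → ext q x = (whm t x + whm (1 - t) x) / 2 := by
    intro x hx hx1
    apply mul_right_cancel₀ (hpp x hx)
    rw [(main x hx hx1).1, f_mul t x ht hx.le]
    ring
  have pos : ∀ x : ℝ, 0 < x → ext q x = (whm t x + whm (1 - t) x) / 2 := by
    intro x hx
    apply mul_right_cancel₀ (hpp x hx)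
    rw [f_mul t x ht hx.le]
    rcases lt_trichotomy x 1 with h | rfl | h
    · rw [(main x hx h).1]; ring
    · rw [hq1]; ring
    · rw [ext_symm hq x hx]
      have := (main (1 / x) (by positivity) (by rw [div_lt_one hx]; exact h)).1
      have hi : x * (1 / x) = 1 := by field_simp
      have hP := flip_quad x (1 / x) (t * (1 - t)) (t ^ 2 + (1 - t) ^ 2) hi
      generalize 1 / x = i at *
      generalize ext q i = z at *
      linear_combination x ^ 3 * this - x * z * hP + (x / 2 * (x * i + 1) + x ^ 2 / 2) * hi
  intro y hy
  rcases hy.eq_or_lt with rfl | hy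
  swap
  · exact pos y hy
  by_cases htt : t * (1 - t) = 0
  · -- here the function is `(1 + x) / 2`
    have hform : ∀ y : ℝ, 0 ≤ y → (whm t y + whm (1 - t) y) / 2 = (1 / 2) * y + 1 / 2 := by
      intro y hy
      rcases mul_eq_zero.1 htt with h | h
      · subst h
        by_cases hy0 : y = 0
        · simp [whm, hy0]
        · simp [whm, hy0]; ring
      · have : t = 1 := by linarith
        subst this
        by_cases hy0 : y = 0
        · simp [whm, hy0]
        · simp [whm, hy0]; ring
    obtain ⟨c0, c1, c2, h⟩ := kernel_lemma ![0, 2, 4] ![1, 3, 5] (by simp)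
      (by simp) (by simp) (by simp; norm_num) (by simp; norm_num) (by simp; norm_num)
      (ext q) (ext r) hq.2.1 hr.2.1 α β hα hβ 1 0 0 (1 / 2) (1 / 2) 0
      (by
        intro i
        have hi : 0 ≤ (![0, 2, 4] : Fin 3 → ℝ) i := by
          fin_cases i <;> simp
        rw [hf _ hi, hform _ hi]
        ring)
      (by
        intro i
        have hi : 0 ≤ (![1, 3, 5] : Fin 3 → ℝ) i := by
          fin_cases i <;> simp
        rw [hf _ hi, hform _ hi]
        ring)
    obtain ⟨g0, g1⟩ := h 0
    obtain ⟨g2, g3⟩ := h 1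
    simp only [Matrix.cons_val_zero, Matrix.cons_val_one, Matrix.cons_val] at g0 g1 g2 g3
    rw [pos 1 (by norm_num), hform _ (by norm_num)] at g1
    rw [pos 2 (by norm_num), hform _ (by norm_num)] at g2
    rw [pos 3 (by norm_num), hform _ (by norm_num)] at g3
    rw [hform _ le_rfl]
    linarith
  · have h0 := (main (1 / 2) (by norm_num) (by norm_num)).2
    have h0 := (mul_eq_zero.1 h0).resolve_right htt
    have a1 : t ≠ 0 := fun h => htt (by simp [h])
    have a2 : 1 - t ≠ 0 := fun h => htt (by simp [h])
    rw [h0]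
    simp [whm, a1, a2]

lemma mem_Ssym (t : ℝ) (ht : t ∈ Set.Icc (0 : ℝ) 1) :
    (fun x : Set.Ici (0 : ℝ) => (whm t (x : ℝ) + whm (1 - t) (x : ℝ)) / 2) ∈ Ssym := by
  have ht' : 1 - t ∈ Set.Icc (0 : ℝ) 1 := ⟨by linarith [ht.2], by linarith [ht.1]⟩
  have hnn : ∀ t ∈ Set.Icc (0 : ℝ) 1, ∀ x : ℝ, 0 ≤ x → 0 ≤ whm t x := by
    intro t ht x hx
    unfold whm
    split_ifs
    · exact zero_le_one
    · have := ht.1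
      have : 0 ≤ 1 - t := by linarith [ht.2]
      positivity
  refine ⟨?_, ?_, ?_, ?_⟩
  · intro x
    have := hnn t ht x x.2
    have := hnn (1 - t) ht' x x.2
    positivity
  · refine om_congr ?_ (om_half (om_whm t ht) (om_whm (1 - t) ht'))
    intro x hx
    rw [ext_of_nonneg _ _ hx]
  · simp [whm]
  · rintro ⟨x, hx⟩ hx0
    simp only at hx0
    have hflip : ∀ t ∈ Set.Icc (0 : ℝ) 1, whm t x = x * whm (1 - t) (1 / x) := by
      intro t ht
      have h0 := ht.1
      have h1 := ht.2
      have hx1 : 1 / x ≠ 0 := by positivity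
      simp only [whm, hx0.ne', hx1, and_false, if_false]
      have p1 : 0 < (1 - t) * x + t := by
        rcases h0.eq_or_lt with rfl | h0
        · simpa using hx0
        · have : 0 ≤ (1 - t) * x := mul_nonneg (by linarith) hx
          linarith
      have e : (1 - (1 - t)) * (1 / x) + (1 - t) = ((1 - t) * x + t) / x := by
        field_simp; ring
      rw [e]
      field_simp
    simp only [recip]
    rw [hflip t ht, hflip (1 - t) ht', show 1 - (1 - t) = t by ring]
    ring

theorem stmt17 (t : ℝ) (ht : t ∈ Set.Icc (0 : ℝ) 1) :
    (fun x : Set.Ici (0 : ℝ) => (whm t (x : ℝ) + whm (1 - t) (x : ℝ)) / 2) ∈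
      Ssym.extremePoints ℝ := by
  rw [mem_extremePoints]
  refine ⟨mem_Ssym t ht, ?_⟩
  rintro q hq r hr ⟨α, β, hα, hβ, hab, h⟩
  have hf : ∀ y : ℝ, 0 ≤ y → α * ext q y + β * ext r y = (whm t y + whm (1 - t) y) / 2 := by
    intro y hy
    rw [ext_of_nonneg _ _ hy, ext_of_nonneg _ _ hy]
    exact congrFun h ⟨y, hy⟩
  constructor
  · funext ⟨y, hy⟩
    have := unique_core t ht q r hq hr α β hα hβ hf y hy
    rwa [ext_of_nonneg _ _ hy] at this
  · funext ⟨y, hy⟩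
    have := unique_core t ht r q hr hq β α hβ hα (fun y hy => by rw [add_comm, hf y hy]) y hy
    rwa [ext_of_nonneg _ _ hy] at this
end
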